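/- Let K be an algebraically closed field, let n >= 1, and let z in FPF_n(I_n). Then J^ss_z equals the intersection, over all D in FP(z), of the ideals (u_{ij} : (i,j) in D) of R_n generated by the variables indexed by D. -/

import Mathlib

namespace Paper

/-!
We model a permutation of the positive integers `{1, 2, 3, ...}` as an `Equiv.Perm ℕ`
that fixes `0`; all notions below refer only to positive inputs.
-/

/-- The rank `r_w(i,j) = #{a ∈ [i] : w(a) ∈ [j]}` of the `i × j` partial
permutation matrix of `w`, where `[k] = {1, ..., k}`. -/
def rnk (w : Equiv.Perm ℕ) (i j : ℕ) : ℕ :=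
  ((Finset.Icc 1 i).filter fun a => w a ∈ Finset.Icc 1 j).card

/-- Right descent set `Des_R(w) = {i ≥ 1 : w(i) > w(i+1)}`. -/
def DesR (w : Equiv.Perm ℕ) : Set ℕ := {i | 1 ≤ i ∧ w (i + 1) < w i}

/-- Left descent set `Des_L(w) = Des_R(w⁻¹)`. -/
def DesL (w : Equiv.Perm ℕ) : Set ℕ := DesR w⁻¹

/-- `S_∞`: permutations of the positive integers fixing all but finitely many points. -/
def SInfty : Set (Equiv.Perm ℕ) :=
  {w | w 0 = 0 ∧ Set.Finite {i : ℕ | w i ≠ i}}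

/-- `S^{m,n}_∞ = {w ∈ S_∞ : Des_R(w) ⊆ [m], Des_L(w) ⊆ [n]}`. -/
def SmnInfty (m n : ℕ) : Set (Equiv.Perm ℕ) :=
  {w | w ∈ SInfty ∧ DesR w ⊆ Set.Icc 1 m ∧ DesL w ⊆ Set.Icc 1 n}

/-- The Rothe diagram `D(w) = {(i,j) : 0 < j < w(i), 0 < i < w⁻¹(j)}`. -/
def Rothe (w : Equiv.Perm ℕ) : Set (ℕ × ℕ) :=
  {p | 0 < p.2 ∧ p.2 < w p.1 ∧ 0 < p.1 ∧ p.1 < w⁻¹ p.2}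

/-- The function `1_FPF`, sending `i ↦ i - (-1)^i` on positive integers (it fixes `0`). -/
def oneFPF : ℕ → ℕ := fun i => if i % 2 = 1 then i + 1 else i - 1

/-- `I^FPF_∞`: fixed-point-free involutions of the positive integers agreeing with
`1_FPF` at all sufficiently large inputs. -/
def IFPFInfty : Set (Equiv.Perm ℕ) :=
  {z | z 0 = 0 ∧ (∀ i, 1 ≤ i → z i ≠ i) ∧ z * z = 1 ∧ ∃ N, ∀ i, N ≤ i → z i = oneFPF i}

/-- The skew-symmetric Rothe diagram `D^ss(z) = {(i,j) : 0 < j < z(i), j < i < z(j)}`. -/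
def Dss (z : Equiv.Perm ℕ) : Set (ℕ × ℕ) :=
  {p | 0 < p.2 ∧ p.2 < z p.1 ∧ p.2 < p.1 ∧ p.1 < z p.2}

/-- `FPF_n(I_n) = {z ∈ I^FPF_∞ : D^ss(z) ⊆ [n] × [n]}`. -/
def FPFIn (n : ℕ) : Set (Equiv.Perm ℕ) :=
  {z | z ∈ IFPFInfty ∧ Dss z ⊆ Set.Icc 1 n ×ˢ Set.Icc 1 n}

/-- `ℓ_fpf(z) = |D^ss(z)|`. -/
noncomputable def ellFpf (z : Equiv.Perm ℕ) : ℕ := (Dss z).ncard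

/-- Bruhat order on `I^FPF_∞`: reflexive-transitive closure of `z < (i,j) z (i,j)`
whenever `i < j` and `ℓ_fpf` goes up by exactly one. -/
def fpfBruhatLe (z y : Equiv.Perm ℕ) : Prop :=
  Relation.ReflTransGen
    (fun a b => ∃ i j : ℕ, 1 ≤ i ∧ i < j ∧
      b = Equiv.swap i j * a * Equiv.swap i j ∧ ellFpf b = ellFpf a + 1) z y

/-- `i` is a visible descent of `z` if `i ≥ 1` and `z(i+1) < min(i, z(i))`. -/
def visibleDescent (z : Equiv.Perm ℕ) (i : ℕ) : Prop :=
  1 ≤ i ∧ z (i + 1) < min i (z i)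

/-- `Ψ(z, p) = {(p,r) z (p,r) : r > p, ℓ_fpf((p,r) z (p,r)) = ℓ_fpf(z) + 1}`. -/
def PsiSet (z : Equiv.Perm ℕ) (p : ℕ) : Set (Equiv.Perm ℕ) :=
  {y | ∃ r : ℕ, p < r ∧ y = Equiv.swap p r * z * Equiv.swap p r ∧ ellFpf y = ellFpf z + 1}

/-- The dominant component `dom(z) = {(i,j) : i, j ≥ 1, r_z(i,j) = 0}`. -/
def domSet (z : Equiv.Perm ℕ) : Set (ℕ × ℕ) :=
  {p | 1 ≤ p.1 ∧ 1 ≤ p.2 ∧ rnk z p.1 p.2 = 0}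

/-- `(p, q)` is an outer corner of `dom(z)`. -/
def IsOuterCorner (z : Equiv.Perm ℕ) (p q : ℕ) : Prop :=
  1 ≤ p ∧ 1 ≤ q ∧ (p, q) ∉ domSet z ∧
    (p = 1 ∨ (p - 1, q) ∈ domSet z) ∧ (q = 1 ∨ (p, q - 1) ∈ domSet z)

/-- `I_n`: involutions in `S_∞` fixing every `i > n`. -/
def InvolIn (n : ℕ) : Set (Equiv.Perm ℕ) :=
  {w | w 0 = 0 ∧ w * w = 1 ∧ ∀ i, n < i → w i = i}

/-- The fixed points of `z` lying in `[n]`. -/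
def fixedPtsIn (n : ℕ) (z : Equiv.Perm ℕ) : Finset ℕ :=
  (Finset.Icc 1 n).filter fun i => z i = i

/-- The function swapping `m + 2t - 1` and `m + 2t` for every `t ≥ 1`, fixing all other points. -/
def tailSwapFun (m : ℕ) : ℕ → ℕ := fun i =>
  if i ≤ m then i else if (i - m) % 2 = 1 then i + 1 else i - 1

theorem tailSwapFun_involutive (m : ℕ) : Function.Involutive (tailSwapFun m) := by
  intro i
  unfold tailSwapFun
  split_ifs <;> omega

/-- The involution swapping `m + 2t - 1` and `m + 2t` for every `t ≥ 1`. -/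
def tailSwap (m : ℕ) : Equiv.Perm ℕ :=
  Function.Involutive.toPerm _ (tailSwapFun_involutive m)

/-- The fixed-point-free standardization `FPF_n(z) = z ⋅ (i_1,n+1)⋯(i_k,n+k) ⋅ c`,
where `i_1 < ⋯ < i_k` are the fixed points of `z` in `[n]` and `c` swaps
`n+k+2t-1, n+k+2t` for all `t ≥ 1`. -/
noncomputable def fpfStd (n : ℕ) (z : Equiv.Perm ℕ) : Equiv.Perm ℕ :=
  z *
    (List.ofFn fun t : Fin (fixedPtsIn n z).card =>
      Equiv.swap ((fixedPtsIn n z).orderEmbOfFin rfl t) (n + (t : ℕ) + 1)).prod *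
    tailSwap (n + (fixedPtsIn n z).card)

/-- `Mat^ss_n(K)`: skew-symmetric `n × n` matrices (transpose is the negative, zero diagonal).
Row/column index `a : Fin n` corresponds to the (1-indexed) row/column `a + 1`. -/
def MatSS (K : Type*) [CommRing K] (n : ℕ) : Set (Matrix (Fin n) (Fin n) K) :=
  {A | A.transpose = -A ∧ ∀ i, A i i = 0}

/-- The skew-symmetric matrix Schubert variety
`X^ss_z = {A ∈ Mat^ss_n : rank A_{[i][j]} ≤ r_z(i,j) for all i, j ∈ [n]}`. -/
noncomputable def Xss (K : Type*) [Field K] (n : ℕ) (z : Equiv.Perm ℕ) :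
    Set (Matrix (Fin n) (Fin n) K) :=
  {A | A ∈ MatSS K n ∧ ∀ (i j : ℕ) (hi : i ≤ n) (hj : j ≤ n), 1 ≤ i → 1 ≤ j →
    (A.submatrix (Fin.castLE hi) (Fin.castLE hj)).rank ≤ rnk z i j}

/-- `#{(i,j) : i > j, j < z(i), i < z(j)}` for a permutation of `Fin N`
(the `0`-indexed version of `ℓ_fpf`). -/
def ellFpfFin {N : ℕ} (z : Equiv.Perm (Fin N)) : ℕ :=
  (Finset.univ.filter fun p : Fin N × Fin N => p.2 < p.1 ∧ p.2 < z p.1 ∧ p.1 < z p.2).card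

/-- The Pfaffian of an `N × N` matrix:
`pf(A) = ∑_{z fpf involution of [N]} (-1)^{ℓ_fpf(z)} ∏_{z(i) < i} A_{z(i), i}`.
(The sum is empty, hence `0`, when `N` is odd.) -/
noncomputable def Pfaffian {R : Type*} [CommRing R] {N : ℕ} (A : Matrix (Fin N) (Fin N) R) : R :=
  ∑ z ∈ Finset.univ.filter (fun z : Equiv.Perm (Fin N) => (∀ i, z i ≠ i) ∧ ∀ i, z (z i) = i),
    (-1 : R) ^ ellFpfFin z * ∏ i ∈ Finset.univ.filter (fun i : Fin N => z i < i), A (z i) i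

/-- Index set for the variables `u_{ij}`, `n ≥ i > j ≥ 1`, of the coordinate ring
`R_n = K[Mat^ss_n]`; the variable `⟨(a, b), _⟩` is `u_{a+1, b+1}`. -/
abbrev SSVar (n : ℕ) : Type := {p : Fin n × Fin n // p.2 < p.1}

/-- The generic skew-symmetric matrix `U^ss` over `R_n`. -/
noncomputable def Uss (K : Type*) [CommRing K] (n : ℕ) :
    Matrix (Fin n) (Fin n) (MvPolynomial (SSVar n) K) :=
  Matrix.of fun i j =>
    if h : j < i then MvPolynomial.X ⟨(i, j), h⟩
    else if h' : i < j then -MvPolynomial.X ⟨(j, i), h'⟩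
    else 0

/-- The ideal of polynomials vanishing on a set `X`, where a point `A` is evaluated
via `ev A : σ → K`. -/
noncomputable def vanishingIdeal {K : Type*} [CommRing K] {σ M : Type*}
    (X : Set M) (ev : M → σ → K) : Ideal (MvPolynomial σ K) where
  carrier := {f | ∀ A ∈ X, MvPolynomial.eval (ev A) f = 0}
  zero_mem' := by simp
  add_mem' := by
    intro f g hf hg
    simp only [Set.mem_setOf_eq] at *
    intro A hA
    rw [map_add, hf A hA, hg A hA, add_zero]
  smul_mem' := by
    intro c f hf
    simp only [Set.mem_setOf_eq] at *
    intro A hA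
    rw [smul_eq_mul, map_mul, hf A hA, mul_zero]

/-- `I(X^ss_z) ⊆ R_n`, where `u_{ij}` is evaluated at `A` as `A_{ij}`. -/
noncomputable def IXss (K : Type*) [Field K] (n : ℕ) (z : Equiv.Perm ℕ) :
    Ideal (MvPolynomial (SSVar n) K) :=
  vanishingIdeal (Xss K n z) fun A v => A v.1.1 v.1.2

/-- `pf(U^ss_{RR})` for a finite row/column set `R` (listed in increasing order). -/
noncomputable def pfUss (K : Type*) [CommRing K] {n : ℕ} (R : Finset (Fin n)) :
    MvPolynomial (SSVar n) K :=
  Pfaffian ((Uss K n).submatrix (fun s => R.orderEmbOfFin rfl s) fun t => R.orderEmbOfFin rfl t)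

/-- The ideal `I^ss_z`, generated by the Pfaffians `pf(U^ss_{RR})` over all nonempty
even-size `R ⊆ [n]` such that `R ⊆ [i]` and `|R ∩ [j]| > r_z(i,j)` for some `i ≥ j`. -/
noncomputable def IssIdeal (K : Type*) [Field K] (n : ℕ) (z : Equiv.Perm ℕ) :
    Ideal (MvPolynomial (SSVar n) K) :=
  Ideal.span {f : MvPolynomial (SSVar n) K | ∃ R : Finset (Fin n),
    R.Nonempty ∧ Even R.card ∧
    (∃ i j : ℕ, 1 ≤ j ∧ j ≤ i ∧ i ≤ n ∧ (∀ a ∈ R, (a : ℕ) + 1 ≤ i) ∧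
      rnk z i j < (R.filter fun a : Fin n => (a : ℕ) + 1 ≤ j).card) ∧
    f = pfUss K R}

/-- The square-free monomial `u^ss_{AB}`: zero if `A ⊙ B` meets the diagonal, and otherwise
the product of the variables `u_{ij}` over the pairs `i > j` with `(i,j)` or `(j,i)` in
`A ⊙ B = {(a_0, b_r), (a_1, b_{r-1}), ..., (a_r, b_0)}`. -/
noncomputable def ussMon (K : Type*) [CommRing K] {n : ℕ} (A B : Finset (Fin n)) :
    MvPolynomial (SSVar n) K :=
  if h : A.card = B.card then
    if ∃ t : Fin A.card, (A.orderEmbOfFin rfl t : Fin n) = B.orderEmbOfFin h.symm t.rev then 0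
    else
      ∏ v ∈ Finset.univ.filter (fun v : SSVar n => ∃ t : Fin A.card,
          (A.orderEmbOfFin rfl t = v.1.1 ∧ B.orderEmbOfFin h.symm t.rev = v.1.2) ∨
          (A.orderEmbOfFin rfl t = v.1.2 ∧ B.orderEmbOfFin h.symm t.rev = v.1.1)),
        MvPolynomial.X v
  else 0

/-- The monomial ideal `J^ss_r` of a symmetric rank table `r`, generated by the monomials
`u^ss_{AB}` with `A ⊆ [i]`, `B ⊆ [j]`, `|A| = |B| = r(i,j) + 1` for some `n ≥ i ≥ j ≥ 1`. -/
noncomputable def JssIdealOfTable (K : Type*) [CommRing K] (n : ℕ) (r : ℕ → ℕ → ℕ) :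
    Ideal (MvPolynomial (SSVar n) K) :=
  Ideal.span {g : MvPolynomial (SSVar n) K | ∃ (i j : ℕ) (A B : Finset (Fin n)),
    1 ≤ j ∧ j ≤ i ∧ i ≤ n ∧
    (∀ a ∈ A, (a : ℕ) + 1 ≤ i) ∧ (∀ b ∈ B, (b : ℕ) + 1 ≤ j) ∧
    A.card = r i j + 1 ∧ B.card = r i j + 1 ∧ g = ussMon K A B}

/-- `J^ss_z = J^ss_{r_z}`. -/
noncomputable def JssIdeal (K : Type*) [CommRing K] (n : ℕ) (z : Equiv.Perm ℕ) :
    Ideal (MvPolynomial (SSVar n) K) :=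
  JssIdealOfTable K n (rnk z)

/-- Total degree of a monomial (exponent vector). -/
def totalDeg {σ : Type*} (m : σ →₀ ℕ) : ℕ := m.sum fun _ e => e

/-- The lexicographic order on the variables `u_{ij}` by the pair `(i, j)`. -/
def varLT {n : ℕ} (v w : SSVar n) : Prop :=
  v.1.1 < w.1.1 ∨ (v.1.1 = w.1.1 ∧ v.1.2 < w.1.2)

/-- The (graded) reverse lexicographic term order on monomials of `R_n`:
`m₁ < m₂` iff `deg m₁ < deg m₂`, or the degrees agree and the lexicographically largest
variable with different exponents has strictly larger exponent in `m₁`. -/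
def revlexLT {n : ℕ} (m₁ m₂ : SSVar n →₀ ℕ) : Prop :=
  totalDeg m₁ < totalDeg m₂ ∨
    (totalDeg m₁ = totalDeg m₂ ∧ ∃ v, m₂ v < m₁ v ∧ ∀ w, varLT v w → m₁ w = m₂ w)

/-- The initial ideal of `I` with respect to a strict term order `lt`: the ideal
generated by the leading monomials `init(f)` of the nonzero `f ∈ I`. -/
noncomputable def initIdeal {K : Type*} [CommRing K] {σ : Type*}
    (lt : (σ →₀ ℕ) → (σ →₀ ℕ) → Prop) (I : Ideal (MvPolynomial σ K)) :
    Ideal (MvPolynomial σ K) :=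
  Ideal.span {g : MvPolynomial σ K | ∃ f ∈ I, f ≠ 0 ∧ ∃ m : σ →₀ ℕ, m ∈ f.support ∧
    (∀ m' ∈ f.support, m' ≠ m → lt m' m) ∧ g = MvPolynomial.monomial m (1 : K)}

/-- A term order on the monomials of a polynomial ring: a linear order in which `1` is
the unique minimum and multiplication by a fixed monomial preserves order. -/
structure TermOrder (σ : Type*) where
  le : (σ →₀ ℕ) → (σ →₀ ℕ) → Prop
  trans : ∀ a b c, le a b → le b c → le a c
  antisymm : ∀ a b, le a b → le b a → a = b
  total : ∀ a b, le a b ∨ le b a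
  zero_le : ∀ a, le 0 a
  add_le_add_right : ∀ a b c, le a b → le (a + c) (b + c)

/-- The initial ideal of `I` with respect to a term order `τ`. -/
noncomputable def initIdealLe {K : Type*} [CommRing K] {σ : Type*}
    (τ : TermOrder σ) (I : Ideal (MvPolynomial σ K)) : Ideal (MvPolynomial σ K) :=
  Ideal.span {g : MvPolynomial σ K | ∃ f ∈ I, f ≠ 0 ∧ ∃ m : σ →₀ ℕ, m ∈ f.support ∧
    (∀ m' ∈ f.support, τ.le m' m) ∧ g = MvPolynomial.monomial m (1 : K)}

/-- An ideal is homogeneous (w.r.t. total degree) iff it contains all homogeneous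
components of its elements. -/
def IsHomogIdeal {K : Type*} [CommSemiring K] {σ : Type*}
    (I : Ideal (MvPolynomial σ K)) : Prop :=
  ∀ f ∈ I, ∀ d : ℕ, MvPolynomial.homogeneousComponent d f ∈ I

/-- The reading order on boxes: rows top to bottom, each row right to left. -/
def pdRel (p q : ℕ × ℕ) : Prop := p.1 < q.1 ∨ (p.1 = q.1 ∧ q.2 ≤ p.2)

instance : DecidableRel pdRel := fun p q => by unfold pdRel; infer_instance

instance : IsTrans (ℕ × ℕ) pdRel :=
  ⟨fun a b c hab hbc => by unfold pdRel at *; omega⟩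

instance : IsAntisymm (ℕ × ℕ) pdRel :=
  ⟨fun a b hab hba => by
    unfold pdRel at hab hba
    exact Prod.ext_iff.mpr ⟨by omega, by omega⟩⟩

instance : IsTotal (ℕ × ℕ) pdRel :=
  ⟨fun a b => by unfold pdRel; omega⟩

/-- The pipe dream reading word of a finite set `D` of boxes: the letters `i + j - 1`
over `(i, j) ∈ D`, in the order making `(i, -j)` increase lexicographically. -/
def pdWord (D : Finset (ℕ × ℕ)) : List ℕ :=
  (D.sort pdRel).map fun p => p.1 + p.2 - 1

/-- The product `s_{i_1} s_{i_2} ⋯ s_{i_l}` of simple transpositions. -/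
def wordProd (l : List ℕ) : Equiv.Perm ℕ :=
  (l.map fun i => Equiv.swap i (i + 1)).prod

/-- `l` is a reduced word for `w`: a minimal-length word of positive letters whose
product of simple transpositions is `w`. -/
def IsReducedWordOf (w : Equiv.Perm ℕ) (l : List ℕ) : Prop :=
  (∀ a ∈ l, 1 ≤ a) ∧ wordProd l = w ∧
    ∀ l' : List ℕ, (∀ a ∈ l', 1 ≤ a) → wordProd l' = w → l.length ≤ l'.length

/-- The set `RP(w)` of reduced pipe dreams for `w`. -/
def RP (w : Equiv.Perm ℕ) : Set (Finset (ℕ × ℕ)) :=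
  {D | (∀ p ∈ D, 1 ≤ p.1 ∧ 1 ≤ p.2) ∧ IsReducedWordOf w (pdWord D)}

/-- `I^FPF_m`: involutions in `S_∞` that are fixed-point-free on `[m]` and fix
all `i > m`. -/
def IFPFm (m : ℕ) : Set (Equiv.Perm ℕ) :=
  {y | y 0 = 0 ∧ y * y = 1 ∧ (∀ i, 1 ≤ i → i ≤ m → y i ≠ i) ∧ ∀ i, m < i → y i = i}

/-- `z = FPF_m(y)`: `z` agrees with `y` on `[m]` and swaps `m + 2k - 1, m + 2k`
for all `k ≥ 1`. -/
def IsFPFStdOf (m : ℕ) (y z : Equiv.Perm ℕ) : Prop :=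
  (∀ i, i ≤ m → z i = y i) ∧
    ∀ k : ℕ, z (m + 2 * k + 1) = m + 2 * k + 2 ∧ z (m + 2 * k + 2) = m + 2 * k + 1

/-- The set `FP(z)` of fpf-involution pipe dreams for `z ∈ I^FPF_∞`. -/
def FP (z : Equiv.Perm ℕ) : Set (Finset (ℕ × ℕ)) :=
  {E | ∃ (m : ℕ) (y : Equiv.Perm ℕ) (D : Finset (ℕ × ℕ)), Even m ∧ y ∈ IFPFm m ∧
    IsFPFStdOf m y z ∧ D ∈ RP y ∧ D.image Prod.swap = D ∧
    E = D.filter fun p => p.2 < p.1}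

/-- The minor `det(U_{AB})` of the generic `m × n` matrix `U`, with rows `A` and
columns `B` listed in increasing order. -/
noncomputable def genMinor (K : Type*) [CommRing K] {m n : ℕ}
    (A : Finset (Fin m)) (B : Finset (Fin n)) (h : A.card = B.card) :
    MvPolynomial (Fin m × Fin n) K :=
  (Matrix.of fun s t : Fin A.card =>
    (MvPolynomial.X (A.orderEmbOfFin rfl s, B.orderEmbOfFin h.symm t) :
      MvPolynomial (Fin m × Fin n) K)).det

/-- The antidiagonal monomial `u_{AB} = ∏_{(a,b) ∈ A ⊙ B} u_{ab}`. -/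
noncomputable def genMon (K : Type*) [CommRing K] {m n : ℕ}
    (A : Finset (Fin m)) (B : Finset (Fin n)) (h : A.card = B.card) :
    MvPolynomial (Fin m × Fin n) K :=
  ∏ t : Fin A.card, MvPolynomial.X (A.orderEmbOfFin rfl t, B.orderEmbOfFin h.symm t.rev)

/-- The exponent vector of the antidiagonal monomial `u_{AB}`. -/
noncomputable def antidiagExp {m n : ℕ} (A : Finset (Fin m)) (B : Finset (Fin n))
    (h : A.card = B.card) : (Fin m × Fin n) →₀ ℕ :=
  ∑ t : Fin A.card, Finsupp.single (A.orderEmbOfFin rfl t, B.orderEmbOfFin h.symm t.rev) 1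

/-- The ideal `I_w`, generated by the minors `det(U_{AB})` with `A ⊆ [i]`, `B ⊆ [j]`,
`|A| = |B| = r_w(i,j) + 1` for some `(i,j) ∈ [m] × [n]`. -/
noncomputable def IwIdeal (K : Type*) [Field K] (m n : ℕ) (w : Equiv.Perm ℕ) :
    Ideal (MvPolynomial (Fin m × Fin n) K) :=
  Ideal.span {g : MvPolynomial (Fin m × Fin n) K |
    ∃ (i j : ℕ) (A : Finset (Fin m)) (B : Finset (Fin n)) (h : A.card = B.card),
      1 ≤ i ∧ i ≤ m ∧ 1 ≤ j ∧ j ≤ n ∧ (∀ a ∈ A, (a : ℕ) + 1 ≤ i) ∧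
      (∀ b ∈ B, (b : ℕ) + 1 ≤ j) ∧ A.card = rnk w i j + 1 ∧ g = genMinor K A B h}

/-- The monomial ideal `J_w`, generated by the monomials `u_{AB}` with `A ⊆ [i]`,
`B ⊆ [j]`, `|A| = |B| = r_w(i,j) + 1` for some `(i,j) ∈ [m] × [n]`. -/
noncomputable def JwIdeal (K : Type*) [Field K] (m n : ℕ) (w : Equiv.Perm ℕ) :
    Ideal (MvPolynomial (Fin m × Fin n) K) :=
  Ideal.span {g : MvPolynomial (Fin m × Fin n) K |
    ∃ (i j : ℕ) (A : Finset (Fin m)) (B : Finset (Fin n)) (h : A.card = B.card),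
      1 ≤ i ∧ i ≤ m ∧ 1 ≤ j ∧ j ≤ n ∧ (∀ a ∈ A, (a : ℕ) + 1 ≤ i) ∧
      (∀ b ∈ B, (b : ℕ) + 1 ≤ j) ∧ A.card = rnk w i j + 1 ∧ g = genMon K A B h}

/-- The matrix Schubert variety
`X_w = {A ∈ Mat_{m×n} : rank A_{[i][j]} ≤ r_w(i,j) for all (i,j) ∈ [m] × [n]}`. -/
noncomputable def Xw (K : Type*) [Field K] (m n : ℕ) (w : Equiv.Perm ℕ) :
    Set (Matrix (Fin m) (Fin n) K) :=
  {A | ∀ (i j : ℕ) (hi : i ≤ m) (hj : j ≤ n), 1 ≤ i → 1 ≤ j →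
    (A.submatrix (Fin.castLE hi) (Fin.castLE hj)).rank ≤ rnk w i j}

/-- `I(X_w)`: the ideal of polynomials vanishing on `X_w`. -/
noncomputable def IXw (K : Type*) [Field K] (m n : ℕ) (w : Equiv.Perm ℕ) :
    Ideal (MvPolynomial (Fin m × Fin n) K) :=
  vanishingIdeal (Xw K m n w) fun A v => A v.1 v.2

/-- The variable `u_{pq}` (with `1 ≤ q < p ≤ n`) of `R_n`. -/
def ssvar {n : ℕ} (p q : ℕ) (hp : p ≤ n) (hq : 1 ≤ q) (hqp : q < p) : SSVar n :=
  ⟨(⟨p - 1, by omega⟩, ⟨q - 1, by omega⟩), Fin.mk_lt_mk.mpr (by omega)⟩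

/-- Index set for the variables `u_{ij}`, `i > j ≥ 1`, over all positive integers. -/
abbrev PVar : Type := {p : ℕ × ℕ // 1 ≤ p.2 ∧ p.2 < p.1}

/-- The generic skew-symmetric array `U^ss` over the positive integers:
`u_{xy}` if `x > y`, `-u_{yx}` if `x < y`, `0` if `x = y`. -/
noncomputable def UssP (K : Type*) [CommRing K] (x y : ℕ) : MvPolynomial PVar K :=
  if h : 1 ≤ y ∧ y < x then MvPolynomial.X ⟨(x, y), h⟩
  else if h' : 1 ≤ x ∧ x < y then -MvPolynomial.X ⟨(y, x), h'⟩
  else 0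

/-- `pf(U^ss_{RR})` for a finite set `R` of positive integers. -/
noncomputable def pfUssP (K : Type*) [CommRing K] (R : Finset ℕ) : MvPolynomial PVar K :=
  Pfaffian (Matrix.of fun s t : Fin R.card =>
    UssP K (R.orderEmbOfFin rfl s) (R.orderEmbOfFin rfl t))

/-- `g_{AB}`: the Pfaffian of the `(|B|+|A|) × (|B|+|A|)` skew-symmetric matrix whose
rows and columns are labeled by `B` (increasing) followed by `A` (increasing), with
entry `U^ss_{xy}` at a position labeled `(x, y)`, except that the entry is `0` when
both labels come from the `A`-block. -/
noncomputable def gAB (K : Type*) [CommRing K] (A B : Finset ℕ) : MvPolynomial PVar K :=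
  Pfaffian ((Matrix.of fun p q : Fin B.card ⊕ Fin A.card =>
      match p, q with
      | Sum.inl s, Sum.inl t => UssP K (B.orderEmbOfFin rfl s) (B.orderEmbOfFin rfl t)
      | Sum.inl s, Sum.inr t => UssP K (B.orderEmbOfFin rfl s) (A.orderEmbOfFin rfl t)
      | Sum.inr s, Sum.inl t => UssP K (A.orderEmbOfFin rfl s) (B.orderEmbOfFin rfl t)
      | Sum.inr _, Sum.inr _ => (0 : MvPolynomial PVar K)).submatrix
    finSumFinEquiv.symm finSumFinEquiv.symm)

/-- The exponent of the sign `⟨T, S⟩ = (-1)^{|S||T| + C(|S|,2) + ∑ of the (1-indexed)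
positions in the increasing enumeration of `T` occupied by elements of `S`}`. -/
def setSgnExp (T S : Finset ℕ) : ℕ :=
  S.card * T.card + Nat.choose S.card 2 +
    ∑ t : Fin T.card, if T.orderEmbOfFin rfl t ∈ S then (t : ℕ) + 1 else 0

/-!
Both sides are monomial ideals with square-free generators, so they are compared one monomial `x` at
a time. Let `U` be the set of boxes whose variable does not divide `x`; it is symmetric and contains
the diagonal. The monomial `x` lies outside `J^ss_z` iff no antidiagonal chain in `[i] × [j]`
avoiding `U` has more than `r_z(i, j)` boxes, and outside the intersection iff some `D ∈ FP(z)` is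
contained in `U`. The theorem is the equivalence of these two conditions.

If a pipe dream is contained in `U`, the bound on chains follows by adding its boxes one at a time.
Conversely, the bound on chains has a version for rectangles with two opposite corners on a lattice
path and on its mirror image. Pushing the path towards the diagonal by one box `b` preserves this
bound for some involution: the same `y` if `b ∉ U` or `y` has no descent at the letter `k` of `b`,
and `s_k y s_k` if `b ∈ U`, `y` has a descent at `k` and `y(k) ≠ k + 1`, in which case `b` and its
mirror image are recorded. If `y(k) = k + 1`, then `y` is again kept. The bound is saved by parity:
the rank of `y` at `(k, k)` is even, while a chain of odd size in a symmetric square can be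
lengthened by replacing one of its halves by the mirror image of the other. Once the path has
become a staircase along the diagonal, `y` is `1_FPF` on `[m]`, and the recorded boxes together with
the diagonal form a symmetric pipe dream inside `U`.
-/

/-! ### Involutions and rank functions -/

theorem apply_apply_of_mul_self_eq_one {α : Type*} {y : Equiv.Perm α} (hy : y * y = 1) (i : α) :
    y (y i) = i :=
  DFunLike.congr_fun hy i

theorem one_le_apply {w : Equiv.Perm ℕ} (hw : w 0 = 0) {i : ℕ} (hi : 1 ≤ i) : 1 ≤ w i :=
  Nat.one_le_iff_ne_zero.mpr fun h =>
    Nat.one_le_iff_ne_zero.mp hi (w.injective (h.trans hw.symm))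

theorem rnk_succ (w : Equiv.Perm ℕ) (k l : ℕ) :
    rnk w (k + 1) l = rnk w k l + if 1 ≤ w (k + 1) ∧ w (k + 1) ≤ l then 1 else 0 := by
  simp only [rnk, Finset.card_filter, Finset.mem_Icc,
    Finset.sum_Icc_succ_top (Nat.le_add_left 1 k)]

theorem rnk_eq_rnk_pred_add (w : Equiv.Perm ℕ) {k : ℕ} (hk : 1 ≤ k) (l : ℕ) :
    rnk w k l = rnk w (k - 1) l + if 1 ≤ w k ∧ w k ≤ l then 1 else 0 := by
  have h := rnk_succ w (k - 1) l
  rwa [Nat.sub_add_cancel hk] at h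

theorem rnk_congr {w w' : Equiv.Perm ℕ} {k : ℕ} (l : ℕ)
    (h : ∀ a, 1 ≤ a → a ≤ k → w a = w' a) : rnk w k l = rnk w' k l := by
  unfold rnk
  congr 1
  refine Finset.filter_congr fun a ha => ?_
  rw [h a (Finset.mem_Icc.mp ha).1 (Finset.mem_Icc.mp ha).2]

theorem rnk_one (k l : ℕ) : rnk 1 k l = min k l := by
  have h : {a ∈ Finset.Icc 1 k | (1 : Equiv.Perm ℕ) a ∈ Finset.Icc 1 l} =
      Finset.Icc 1 (min k l) := by
    ext a
    simp only [Finset.mem_filter, Finset.mem_Icc, Equiv.Perm.coe_one, id]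
    omega
  rw [rnk, h, Nat.card_Icc, Nat.add_sub_cancel]

theorem le_rnk_iff {w : Equiv.Perm ℕ} {k l : ℕ} :
    k ≤ rnk w k l ↔ ∀ a, 1 ≤ a → a ≤ k → 1 ≤ w a ∧ w a ≤ l := by
  have h := Finset.card_filter_eq_iff (s := Finset.Icc 1 k) (p := fun a => w a ∈ Finset.Icc 1 l)
  rw [Nat.card_Icc, Nat.add_sub_cancel] at h
  have hle : rnk w k l ≤ k := (Finset.card_filter_le _ _).trans_eq (by simp)
  rw [hle.ge_iff_eq', eq_comm, rnk, h]
  simp only [Finset.mem_Icc, and_imp]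

theorem rnk_inv (w : Equiv.Perm ℕ) (k l : ℕ) : rnk w⁻¹ l k = rnk w k l :=
  Finset.card_equiv w⁻¹ fun i => by simp [and_comm]

theorem rnk_comm {y : Equiv.Perm ℕ} (hy : y * y = 1) (k l : ℕ) : rnk y k l = rnk y l k := by
  rw [← rnk_inv, inv_eq_of_mul_eq_one_right hy]

theorem rnk_mul_swap (w : Equiv.Perm ℕ) {k k' : ℕ} (hk : 1 ≤ k) (h : k' ≠ k) (l : ℕ) :
    rnk (w * Equiv.swap k (k + 1)) k' l = rnk w k' l := by
  refine Finset.card_equiv (Equiv.swap k (k + 1)) fun i => ?_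
  simp only [Finset.mem_filter, Finset.mem_Icc, Equiv.Perm.mul_apply]
  refine and_congr_left fun _ => ?_
  rw [Equiv.swap_apply_def]
  split_ifs <;> omega

theorem even_rnk_self {y : Equiv.Perm ℕ} {k : ℕ} (hy : y * y = 1)
    (hfix : ∀ i, 1 ≤ i → i ≤ k → y i ≠ i) : Even (rnk y k k) := by
  have hyy := apply_apply_of_mul_self_eq_one hy
  suffices h : ((rnk y k k : ℕ) : ZMod 2) = 0 from
    even_iff_two_dvd.mpr ((ZMod.natCast_eq_zero_iff _ 2).mp h)
  rw [rnk, Finset.card_eq_sum_ones, Nat.cast_sum]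
  refine Finset.sum_involution (fun a _ => y a) (fun _ _ => by decide) (fun a ha _ => ?_)
    (fun a ha => ?_) fun a _ => hyy a
  · obtain ⟨h1, hk⟩ := Finset.mem_Icc.mp (Finset.mem_filter.mp ha).1
    exact hfix a h1 hk
  · simp only [Finset.mem_filter, hyy] at ha ⊢
    exact ha.symm

/-! ### Antidiagonal chains -/

/-- `C` is a strict antidiagonal chain of boxes with rows in `(a, b]` and columns in `(c, d]`,
none of which lies in `U`. Such chains are the sets `A ⊙ B` whose monomial survives when the
variables indexed by `U` are set to zero. -/
structure IsAvoidingChain (U : Set (ℕ × ℕ)) (a b c d : ℕ) (C : Finset (ℕ × ℕ)) : Prop where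
  antidiagonal : ∀ x ∈ C, ∀ y ∈ C,
    x = y ∨ (x.1 < y.1 ∧ y.2 < x.2) ∨ (y.1 < x.1 ∧ x.2 < y.2)
  notMem : ∀ x ∈ C, x ∉ U
  row : ∀ x ∈ C, a < x.1 ∧ x.1 ≤ b
  col : ∀ x ∈ C, c < x.2 ∧ x.2 ≤ d

theorem card_image_swap (C : Finset (ℕ × ℕ)) : (C.image Prod.swap).card = C.card :=
  Finset.card_image_of_injective C Prod.swap_injective

theorem mem_image_swap {C : Finset (ℕ × ℕ)} {x : ℕ × ℕ} : x ∈ C.image Prod.swap ↔ x.swap ∈ C := by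
  rw [← Finset.mem_coe, Finset.coe_image, Set.image_swap_eq_preimage_swap, Set.mem_preimage,
    Finset.mem_coe]

namespace IsAvoidingChain

variable {U U' : Set (ℕ × ℕ)} {a b c d a' b' c' d' : ℕ} {C C' : Finset (ℕ × ℕ)}

theorem anti (h : IsAvoidingChain U a b c d C) (hU : U' ⊆ U) : IsAvoidingChain U' a b c d C :=
  ⟨h.antidiagonal, fun x hx hxU => h.notMem x hx (hU hxU), h.row, h.col⟩

theorem of_subset (h : IsAvoidingChain U a b c d C) (hC : C' ⊆ C)
    (hrow : ∀ x ∈ C', a' < x.1 ∧ x.1 ≤ b') (hcol : ∀ x ∈ C', c' < x.2 ∧ x.2 ≤ d') :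
    IsAvoidingChain U a' b' c' d' C' :=
  ⟨fun x hx y hy => h.antidiagonal x (hC hx) y (hC hy), fun x hx => h.notMem x (hC hx), hrow, hcol⟩

theorem of_le (h : IsAvoidingChain U a b c d C) (ha : a' ≤ a) (hb : b ≤ b') (hc : c' ≤ c)
    (hd : d ≤ d') : IsAvoidingChain U a' b' c' d' C :=
  h.of_subset subset_rfl (fun x hx => ⟨ha.trans_lt (h.row x hx).1, (h.row x hx).2.trans hb⟩)
    fun x hx => ⟨hc.trans_lt (h.col x hx).1, (h.col x hx).2.trans hd⟩

theorem subset (h : IsAvoidingChain U a b c d C) (hC : C' ⊆ C) : IsAvoidingChain U a b c d C' :=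
  h.of_subset hC (fun x hx => h.row x (hC hx)) fun x hx => h.col x (hC hx)

theorem empty : IsAvoidingChain U a b c d ∅ := by constructor <;> simp

theorem image_swap (hU : ∀ x ∈ U, x.swap ∈ U) (h : IsAvoidingChain U a b c d C) :
    IsAvoidingChain U c d a b (C.image Prod.swap) := by
  constructor <;> simp only [mem_image_swap]
  · intro x hx y hy
    rcases h.antidiagonal _ hx _ hy with hxy | hxy | hxy
    · exact .inl (Prod.swap_injective hxy)
    · exact .inr (.inr hxy.symm)
    · exact .inr (.inl hxy.symm)
  · exact fun x hx hxU => h.notMem _ hx (hU x hxU)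
  · exact fun x hx => h.col _ hx
  · exact fun x hx => h.row _ hx

theorem insert_southwest (h : IsAvoidingChain U a b c d C) {x : ℕ × ℕ} (hxU : x ∉ U)
    (hrow : b < x.1) (hcol : x.2 ≤ c) (hx : c' < x.2) (hac : a ≤ b) (hcd : c ≤ d) :
    IsAvoidingChain U a x.1 c' d (insert x C) := by
  have hx' : ∀ y ∈ C, y.1 < x.1 ∧ x.2 < y.2 := fun y hy =>
    ⟨(h.row y hy).2.trans_lt hrow, hcol.trans_lt (h.col y hy).1⟩
  constructor
  · intro y hy z hz
    rw [Finset.mem_insert] at hy hz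
    rcases hy with rfl | hy <;> rcases hz with rfl | hz
    · exact .inl rfl
    · exact .inr (.inr (hx' z hz))
    · exact .inr (.inl (hx' y hy))
    · exact h.antidiagonal y hy z hz
  all_goals rw [Finset.forall_mem_insert]
  · exact ⟨hxU, h.notMem⟩
  · exact ⟨by omega, fun y hy => by have := h.row y hy; omega⟩
  · exact ⟨by omega, fun y hy => by have := h.col y hy; omega⟩

theorem card_le_cols (h : IsAvoidingChain U a b c d C) : C.card ≤ d - c := by
  rw [← Nat.card_Ioc]
  refine Finset.card_le_card_of_injOn Prod.snd
    (fun x hx => Finset.mem_coe.mpr (Finset.mem_Ioc.mpr (h.col x hx))) fun x hx y hy hxy => ?_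
  rcases h.antidiagonal x hx y hy with h | h | h <;> [exact h; omega; omega]

theorem card_le_rows (h : IsAvoidingChain U a b c d C) : C.card ≤ b - a := by
  rw [← card_image_swap]
  exact ((h.anti (Set.empty_subset U)).image_swap fun _ hx => hx.elim).card_le_cols

/-- A chain strictly below the diagonal can be joined with its own transpose. -/
theorem union_image_swap (hU : ∀ x ∈ U, x.swap ∈ U) (h : IsAvoidingChain U a b a b C)
    (hlow : ∀ x ∈ C, x.2 < x.1) :
    IsAvoidingChain U a b a b (C ∪ C.image Prod.swap) ∧
      (C ∪ C.image Prod.swap).card = 2 * C.card := by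
  have hcross : ∀ x ∈ C, ∀ y ∈ C, y.2 < x.1 ∧ x.2 < y.1 := fun x hx y hy => by
    have := hlow x hx
    have := hlow y hy
    rcases h.antidiagonal x hx y hy with rfl | h | h <;> omega
  have hswap := h.image_swap hU
  refine ⟨⟨?_, ?_, ?_, ?_⟩, ?_⟩
  · intro x hx y hy
    rcases Finset.mem_union.mp hx with hx | hx <;> rcases Finset.mem_union.mp hy with hy | hy
    · exact h.antidiagonal x hx y hy
    · exact .inr (.inr (hcross x hx _ (mem_image_swap.mp hy)))
    · exact .inr (.inl (hcross y hy _ (mem_image_swap.mp hx)))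
    · exact hswap.antidiagonal x hx y hy
  · exact fun x hx => (Finset.mem_union.mp hx).elim (h.notMem x) (hswap.notMem x)
  · exact fun x hx => (Finset.mem_union.mp hx).elim (h.row x) (hswap.row x)
  · exact fun x hx => (Finset.mem_union.mp hx).elim (h.col x) (hswap.col x)
  · rw [Finset.card_union_of_disjoint, card_image_swap, two_mul]
    refine Finset.disjoint_left.mpr fun x hx hx' => ?_
    exact (hlow x hx).asymm (hlow _ (mem_image_swap.mp hx'))

theorem exists_card_lt_of_card_lt (hU : ∀ x ∈ U, x.swap ∈ U) (h : IsAvoidingChain U a b a b C)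
    (hcard : C.card < 2 * {x ∈ C | x.2 < x.1}.card) :
    ∃ C', IsAvoidingChain U a b a b C' ∧ C.card < C'.card := by
  obtain ⟨hchain, heq⟩ := (h.subset (Finset.filter_subset _ C)).union_image_swap hU
    fun x hx => (Finset.mem_filter.mp hx).2
  exact ⟨_, hchain, hcard.trans_eq heq.symm⟩

/-- One of the two halves of an odd chain, below or above the diagonal, has more than half of
its boxes; symmetrising that half gives a longer chain. -/
theorem exists_card_lt_of_odd (hU : ∀ x ∈ U, x.swap ∈ U) (hdiag : ∀ i, (i, i) ∈ U)
    (h : IsAvoidingChain U a b a b C) (hodd : Odd C.card) :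
    ∃ C', IsAvoidingChain U a b a b C' ∧ C.card < C'.card := by
  by_cases hlow : C.card < 2 * {x ∈ C | x.2 < x.1}.card
  · exact h.exists_card_lt_of_card_lt hU hlow
  have hsplit := Finset.card_filter_add_card_filter_not (s := C) (fun x => x.2 < x.1)
  have hupper : {x ∈ C.image Prod.swap | x.2 < x.1}.card = {x ∈ C | ¬ x.2 < x.1}.card := by
    rw [Finset.filter_image, card_image_swap]
    refine congrArg _ (Finset.filter_congr fun x hx => ?_)
    have hne : x.1 ≠ x.2 := fun heq => h.notMem x hx ((Prod.ext rfl heq.symm : x = (x.1, x.1)) ▸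
      hdiag x.1)
    simp only [Prod.snd_swap, Prod.fst_swap]
    omega
  obtain ⟨t, ht⟩ := hodd
  simpa only [card_image_swap] using (h.image_swap hU).exists_card_lt_of_card_lt hU
    (by rw [hupper, card_image_swap]; omega)

theorem card_lt_of_odd (hU : ∀ x ∈ U, x.swap ∈ U) (hdiag : ∀ i, (i, i) ∈ U)
    (h : IsAvoidingChain U a b a b C) (hodd : Odd (b - a)) : C.card < b - a := by
  refine h.card_le_rows.lt_of_ne fun heq => ?_
  obtain ⟨C', hC', hlt⟩ := h.exists_card_lt_of_odd hU hdiag (heq ▸ hodd)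
  exact absurd hC'.card_le_rows (by omega)

end IsAvoidingChain

/-! ### Inversions and word length -/

/-- The inversions of `w`. Their number bounds the length of every word for `w` from below, which
is how words are shown to be reduced. -/
def inversionSet (w : Equiv.Perm ℕ) : Set (ℕ × ℕ) := {x | x.1 < x.2 ∧ w x.2 < w x.1}

theorem inversionSet_mul_swap {w : Equiv.Perm ℕ} {k : ℕ} (hk : w k < w (k + 1)) :
    inversionSet (w * Equiv.swap k (k + 1)) = insert (k, k + 1)
      ((Equiv.swap k (k + 1)).prodCongr (Equiv.swap k (k + 1)) '' inversionSet w) := by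
  ext ⟨a, b⟩
  rw [Set.mem_insert_iff, Set.mem_image_equiv]
  simp only [inversionSet, Set.mem_ofPred_eq, Equiv.Perm.mul_apply, Prod.mk.injEq,
    Equiv.prodCongr_symm, Equiv.symm_swap, Equiv.prodCongr_apply, Prod.map_apply]
  by_cases hab : a = k ∧ b = k + 1
  · obtain ⟨rfl, rfl⟩ := hab
    simpa using hk
  · refine ⟨fun h => .inr ⟨?_, h.2⟩, fun h => ⟨?_, (h.resolve_left hab).2⟩⟩
    · have := h.1
      simp only [Equiv.swap_apply_def]
      split_ifs <;> omega
    · obtain ⟨hlt, hw⟩ := h.resolve_left hab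
      simp only [Equiv.swap_apply_def] at hlt hw
      split_ifs at hlt hw <;> omega

theorem encard_inversionSet_mul_swap {w : Equiv.Perm ℕ} {k : ℕ} (hk : w k < w (k + 1)) :
    (inversionSet (w * Equiv.swap k (k + 1))).encard = (inversionSet w).encard + 1 := by
  rw [inversionSet_mul_swap hk, Set.encard_insert_of_notMem, (Equiv.injective _).encard_image]
  rw [Set.mem_image_equiv]
  rintro ⟨hlt, -⟩
  simp only [Equiv.prodCongr_symm, Equiv.symm_swap, Equiv.prodCongr_apply, Prod.map_apply,
    Equiv.swap_apply_left, Equiv.swap_apply_right] at hlt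
  omega

theorem encard_inversionSet_mul_swap_le (w : Equiv.Perm ℕ) (k : ℕ) :
    (inversionSet (w * Equiv.swap k (k + 1))).encard ≤ (inversionSet w).encard + 1 := by
  rcases lt_trichotomy (w k) (w (k + 1)) with hlt | heq | hgt
  · exact (encard_inversionSet_mul_swap hlt).le
  · exact absurd (w.injective heq) (by omega)
  · have h := encard_inversionSet_mul_swap (w := w * Equiv.swap k (k + 1)) (k := k) (by simpa)
    rw [mul_assoc, Equiv.swap_mul_self, mul_one] at h
    exact (le_self_add.trans h.ge).trans le_self_add

theorem encard_inversionSet_inv (w : Equiv.Perm ℕ) :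
    (inversionSet w⁻¹).encard = (inversionSet w).encard := by
  have h : inversionSet w⁻¹ =
      ((w.prodCongr w).trans (Equiv.prodComm ℕ ℕ)) '' inversionSet w := by
    ext x
    rw [Set.mem_image_equiv]
    exact ⟨fun hx => ⟨hx.2, by simpa using hx.1⟩, fun hx => ⟨by simpa using hx.2, hx.1⟩⟩
  rw [h, (Equiv.injective _).encard_image]

theorem encard_inversionSet_conj_swap {y : Equiv.Perm ℕ} {k : ℕ} (hy : y * y = 1)
    (hk : y k < y (k + 1)) (hfix : y k ≠ k) :
    (inversionSet (Equiv.swap k (k + 1) * y * Equiv.swap k (k + 1))).encard =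
      (inversionSet y).encard + 2 := by
  have hne : y (k + 1) ≠ k := fun h => by
    have := apply_apply_of_mul_self_eq_one hy (k + 1)
    rw [h] at this
    omega
  have hasc : (Equiv.swap k (k + 1) * y) k < (Equiv.swap k (k + 1) * y) (k + 1) := by
    simp only [Equiv.Perm.mul_apply, Equiv.swap_apply_def]
    split_ifs <;> omega
  have hinv : (Equiv.swap k (k + 1) * y)⁻¹ = y * Equiv.swap k (k + 1) := by
    rw [mul_inv_rev, inv_eq_of_mul_eq_one_right hy, Equiv.swap_inv]
  rw [encard_inversionSet_mul_swap hasc, ← encard_inversionSet_inv, hinv,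
    encard_inversionSet_mul_swap hk, add_assoc, one_add_one_eq_two]

theorem wordProd_nil : wordProd [] = 1 := rfl

theorem wordProd_append (l l' : List ℕ) : wordProd (l ++ l') = wordProd l * wordProd l' := by
  simp [wordProd]

theorem wordProd_singleton (k : ℕ) : wordProd [k] = Equiv.swap k (k + 1) := by simp [wordProd]

theorem encard_inversionSet_wordProd_le (l : List ℕ) :
    (inversionSet (wordProd l)).encard ≤ l.length := by
  induction l using List.reverseRecOn with
  | nil =>
    have h : inversionSet (wordProd []) = ∅ := Set.eq_empty_of_forall_notMem fun x hx =>
      hx.1.asymm hx.2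
    simp [h]
  | append_singleton l k ih =>
    rw [wordProd_append, wordProd_singleton, List.length_append, List.length_singleton,
      Nat.cast_add, Nat.cast_one]
    exact (encard_inversionSet_mul_swap_le _ k).trans (by gcongr)

theorem wordProd_mul_swap_comm (l : List ℕ) (k : ℕ) (h : ∀ a ∈ l, k + 2 ≤ a ∨ a + 2 ≤ k) :
    wordProd l * Equiv.swap k (k + 1) = Equiv.swap k (k + 1) * wordProd l := by
  refine Commute.list_prod_left _ _ fun s hs => ?_
  obtain ⟨a, ha, rfl⟩ := List.mem_map.mp hs
  refine (Equiv.Perm.disjoint_swap_swap ?_).commute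
  have := h a ha
  simp only [List.nodup_cons, List.mem_cons, List.not_mem_nil, or_false, List.nodup_nil,
    not_false_eq_true, and_true]
  omega

/-! ### Reading words of sets of boxes -/

theorem pdWord_empty : pdWord ∅ = [] := by simp [pdWord]

theorem pdWord_singleton (q : ℕ × ℕ) : pdWord {q} = [q.1 + q.2 - 1] := by simp [pdWord]

theorem length_pdWord (D : Finset (ℕ × ℕ)) : (pdWord D).length = D.card := by simp [pdWord]

theorem mem_pdWord {D : Finset (ℕ × ℕ)} {a : ℕ} :
    a ∈ pdWord D ↔ ∃ p ∈ D, p.1 + p.2 - 1 = a := by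
  simp [pdWord]

theorem pdWord_union {A B : Finset (ℕ × ℕ)} (h : ∀ a ∈ A, ∀ b ∈ B, ¬ pdRel b a) :
    pdWord (A ∪ B) = pdWord A ++ pdWord B := by
  suffices hsort : (A ∪ B).sort pdRel = A.sort pdRel ++ B.sort pdRel by
    rw [pdWord, hsort, List.map_append, pdWord, pdWord]
  refine List.Perm.eq_of_pairwise (le := pdRel) (fun a b _ _ => antisymm)
    (Finset.pairwise_sort _ _) ?_ ?_
  · refine List.pairwise_append.mpr ⟨Finset.pairwise_sort _ _, Finset.pairwise_sort _ _, ?_⟩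
    intro a ha b hb
    exact (total_of pdRel a b).resolve_right
      (h a ((Finset.mem_sort _).mp ha) b ((Finset.mem_sort _).mp hb))
  · rw [List.perm_ext_iff_of_nodup (Finset.sort_nodup _ _)]
    · simp
    · refine List.nodup_append.mpr ⟨Finset.sort_nodup _ _, Finset.sort_nodup _ _, ?_⟩
      rintro a ha _ hb rfl
      exact h a ((Finset.mem_sort _).mp ha) a ((Finset.mem_sort _).mp hb) (refl_of pdRel a)

theorem pdWord_eq_append_filter (D : Finset (ℕ × ℕ)) (q : ℕ × ℕ) :
    pdWord D = pdWord {p ∈ D | pdRel p q} ++ pdWord {p ∈ D | ¬ pdRel p q} := by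
  rw [← pdWord_union, Finset.filter_union_filter_not_eq]
  intro a ha b hb hba
  exact (Finset.mem_filter.mp hb).2 (trans_of pdRel hba (Finset.mem_filter.mp ha).2)

theorem pdWord_insert {D : Finset (ℕ × ℕ)} {q : ℕ × ℕ} (hq : q ∉ D) :
    pdWord (insert q D) = pdWord {p ∈ D | pdRel p q} ++ [q.1 + q.2 - 1] ++
      pdWord {p ∈ D | ¬ pdRel p q} := by
  rw [pdWord_eq_append_filter _ q, Finset.filter_insert, if_pos (refl_of pdRel q),
    Finset.filter_insert, if_neg (not_not_intro (refl_of pdRel q)), ← pdWord_singleton q,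
    Finset.insert_eq q, Finset.union_comm, pdWord_union]
  intro a ha b hb hba
  rw [Finset.mem_singleton.mp hb] at hba
  rw [Finset.mem_filter] at ha
  exact hq (antisymm hba ha.2 ▸ ha.1)

theorem wordProd_pdWord_insert_southwest {D : Finset (ℕ × ℕ)} {q : ℕ × ℕ}
    (hpos : 1 ≤ q.1 ∧ 1 ≤ q.2) (h : ∀ p ∈ D, p.1 < q.1 ∨ q.2 < p.2) :
    wordProd (pdWord (insert q D)) =
      wordProd (pdWord D) * Equiv.swap (q.1 + q.2 - 1) (q.1 + q.2 - 1 + 1) := by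
  have hq : q ∉ D := fun hq => (h q hq).elim (lt_irrefl _) (lt_irrefl _)
  rw [pdWord_insert hq, pdWord_eq_append_filter D q]
  simp only [wordProd_append, wordProd_singleton, mul_assoc]
  rw [wordProd_mul_swap_comm]
  intro a ha
  obtain ⟨p, hp, rfl⟩ := mem_pdWord.mp ha
  obtain ⟨hpD, hpq⟩ := Finset.mem_filter.mp hp
  have := h p hpD
  unfold pdRel at hpq
  omega

theorem wordProd_pdWord_insert_northeast {D : Finset (ℕ × ℕ)} {q : ℕ × ℕ}
    (hpos : 1 ≤ q.1 ∧ 1 ≤ q.2) (hD : ∀ p ∈ D, 1 ≤ p.1 ∧ 1 ≤ p.2)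
    (h : ∀ p ∈ D, q.1 < p.1 ∨ p.2 < q.2) :
    wordProd (pdWord (insert q D)) =
      Equiv.swap (q.1 + q.2 - 1) (q.1 + q.2 - 1 + 1) * wordProd (pdWord D) := by
  have hq : q ∉ D := fun hq => (h q hq).elim (lt_irrefl _) (lt_irrefl _)
  rw [pdWord_insert hq, pdWord_eq_append_filter D q]
  simp only [wordProd_append, wordProd_singleton, ← mul_assoc]
  rw [wordProd_mul_swap_comm]
  intro a ha
  obtain ⟨p, hp, rfl⟩ := mem_pdWord.mp ha
  obtain ⟨hpD, hpq⟩ := Finset.mem_filter.mp hp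
  have := h p hpD
  have := hD p hpD
  unfold pdRel at hpq
  omega

theorem mem_RP_of_card_le {D : Finset (ℕ × ℕ)} (hpos : ∀ p ∈ D, 1 ≤ p.1 ∧ 1 ≤ p.2)
    (hcard : (D.card : ℕ∞) ≤ (inversionSet (wordProd (pdWord D))).encard) :
    D ∈ RP (wordProd (pdWord D)) := by
  refine ⟨hpos, fun a ha => ?_, rfl, fun l' _ hl' => ?_⟩
  · obtain ⟨p, hp, rfl⟩ := mem_pdWord.mp ha
    have := hpos p hp
    omega
  · rw [length_pdWord]
    rw [← hl'] at hcard
    exact_mod_cast hcard.trans (encard_inversionSet_wordProd_le l')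

/-! ### Chains avoiding a set of boxes are bounded by the ranks of its word -/

theorem IsAvoidingChain.southwest_cases {U : Set (ℕ × ℕ)} {a b c d : ℕ} {C : Finset (ℕ × ℕ)}
    (h : IsAvoidingChain U a (b + 1) c d C) :
    IsAvoidingChain U a b c d C ∨ (c < d ∧ IsAvoidingChain U a (b + 1) (c + 1) d C) ∨
      (b + 1, c + 1) ∈ C ∧ IsAvoidingChain U a b (c + 1) d (C.erase (b + 1, c + 1)) := by
  by_cases hrow : ∀ x ∈ C, x.1 ≤ b
  · exact .inl (h.of_subset subset_rfl (fun x hx => ⟨(h.row x hx).1, hrow x hx⟩) h.col)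
  push Not at hrow
  obtain ⟨x, hx, hxrow⟩ := hrow
  by_cases hcol : ∀ x ∈ C, c + 1 < x.2
  · exact .inr (.inl ⟨(h.col x hx).1.trans_le (h.col x hx).2,
      h.of_subset subset_rfl h.row fun x hx => ⟨hcol x hx, (h.col x hx).2⟩⟩)
  push Not at hcol
  obtain ⟨y, hy, hycol⟩ := hcol
  have hx' := And.intro (h.row x hx) (h.col x hx)
  have hy' := And.intro (h.row y hy) (h.col y hy)
  obtain rfl : x = (b + 1, c + 1) := by
    rcases h.antidiagonal x hx y hy with rfl | hxy | hxy
    · exact Prod.ext (by omega) (by omega)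
    all_goals omega
  refine .inr (.inr ⟨hx, h.of_subset (Finset.erase_subset _ _) ?_ ?_⟩) <;>
  · intro t ht
    obtain ⟨hne, ht⟩ := Finset.mem_erase.mp ht
    have := h.row t ht
    have := h.col t ht
    rcases h.antidiagonal _ hx t ht with heq | hlt | hlt
    · exact absurd heq.symm hne
    all_goals dsimp only at hlt; omega

/-- The ranks of `w` bound the chains avoiding `D` in every rectangle with south-west corner
`(i, c)` for which no box of `D` lies weakly south-west of the box `(i + 1, c)`. For `c = 0` this is
the bound of the chains in `[i] × [j]` by `r_w(i,j)`; general `c` makes an induction on `D` work. -/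
def ChainBound (D : Finset (ℕ × ℕ)) (w : Equiv.Perm ℕ) : Prop :=
  ∀ (i c j : ℕ) (C : Finset (ℕ × ℕ)), c ≤ j → (∀ p ∈ D, p.1 ≤ i ∨ c < p.2) →
    IsAvoidingChain D 0 i c j C → c + C.card ≤ rnk w (i + c) j

theorem chainBound_empty : ChainBound ∅ 1 := by
  intro i c j C hcj _ hC
  have hcols := hC.card_le_cols
  have hrows := hC.card_le_rows
  rw [rnk_one]
  omega

namespace ChainBound

variable {D : Finset (ℕ × ℕ)} {w : Equiv.Perm ℕ} {q : ℕ × ℕ}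

theorem card_le_rnk_mul_swap (h : ChainBound D w) (hpos : 1 ≤ q.1 ∧ 1 ≤ q.2) {i c j : ℕ}
    {C : Finset (ℕ × ℕ)} (hne : i + c ≠ q.1 + q.2 - 1) (hcj : c ≤ j)
    (hD : ∀ p ∈ D, p.1 ≤ i ∨ c < p.2) (hC : IsAvoidingChain ↑(insert q D) 0 i c j C) :
    c + C.card ≤
      rnk (w * Equiv.swap (q.1 + q.2 - 1) (q.1 + q.2 - 1 + 1)) (i + c) j := by
  rw [rnk_mul_swap w (by omega) hne]
  exact h i c j C hcj hD (hC.anti (Finset.coe_subset.mpr (Finset.subset_insert q D)))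

theorem insert_southwest (h : ChainBound D w) (hpos : 1 ≤ q.1 ∧ 1 ≤ q.2)
    (hlast : ∀ p ∈ D, p.1 < q.1 ∨ (p.1 = q.1 ∧ q.2 < p.2)) :
    ChainBound (insert q D) (w * Equiv.swap (q.1 + q.2 - 1) (q.1 + q.2 - 1 + 1)) := by
  intro i
  induction i with
  | zero =>
    intro c j C hcj hD hC
    have := hD q (Finset.mem_insert_self q D)
    exact h.card_le_rnk_mul_swap hpos (by omega) hcj
      (fun p hp => hD p (Finset.mem_insert_of_mem hp)) hC
  | succ i ih =>
    intro c j C hcj hD hC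
    obtain ⟨hq, hD⟩ := Finset.forall_mem_insert .. |>.mp hD
    by_cases hk : i + 1 + c = q.1 + q.2 - 1
    swap
    · exact h.card_le_rnk_mul_swap hpos hk hcj hD hC
    rcases hC.southwest_cases with hrow | ⟨hcj, hcol⟩ | ⟨hmem, herase⟩
    · have hi := h.card_le_rnk_mul_swap hpos (by omega) hcj
        (fun p hp => by have := hlast p hp; omega) hrow
      rw [Nat.add_right_comm, rnk_succ]
      omega
    · have hi := h.card_le_rnk_mul_swap hpos (c := c + 1) (by omega) hcj
        (fun p hp => by have := hlast p hp; omega) hcol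
      rw [← add_assoc, rnk_succ] at hi
      split_ifs at hi <;> omega
    · have hxq : (i + 1, c + 1) ≠ q := fun heq =>
        hC.notMem _ hmem (heq ▸ Finset.mem_coe.mpr (Finset.mem_insert_self _ D))
      have hrow : i + 1 ≠ q.1 := fun heq => hxq (Prod.ext heq (by dsimp only; omega))
      have := (hC.col _ hmem).2
      have hi := ih (c + 1) j _ this (Finset.forall_mem_insert .. |>.mpr
        ⟨by omega, fun p hp => by have := hlast p hp; omega⟩) herase
      have := Finset.card_pos.mpr ⟨_, hmem⟩
      rw [Finset.card_erase_of_mem hmem, show i + (c + 1) = i + 1 + c by omega] at hi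
      omega

end ChainBound

theorem finset_induction_on_reading_order {P : Finset (ℕ × ℕ) → Prop} (D : Finset (ℕ × ℕ))
    (empty : P ∅) (insert : ∀ q D, (∀ p ∈ D, p.1 < q.1 ∨ (p.1 = q.1 ∧ q.2 < p.2)) →
      P D → P (insert q D)) : P D := by
  refine Finset.induction_on_max_value (fun x => toLex (x.1, OrderDual.toDual x.2)) D empty ?_
  intro q D hq hmax
  refine insert q D fun p hp => ?_
  have hne : p ≠ q := fun heq => hq (heq ▸ hp)
  have hle := Prod.Lex.toLex_le_toLex.mp (hmax p hp)
  simp only [OrderDual.toDual_le_toDual] at hle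
  rw [Ne, Prod.ext_iff] at hne
  omega

theorem chainBound_wordProd (D : Finset (ℕ × ℕ)) (hpos : ∀ p ∈ D, 1 ≤ p.1 ∧ 1 ≤ p.2) :
    ChainBound D (wordProd (pdWord D)) := by
  induction D using finset_induction_on_reading_order with
  | empty => exact pdWord_empty ▸ chainBound_empty
  | insert q D hlast ih =>
    obtain ⟨hq, hD⟩ := Finset.forall_mem_insert .. |>.mp hpos
    rw [wordProd_pdWord_insert_southwest hq fun p hp => by have := hlast p hp; omega]
    exact (ih hD).insert_southwest hq hlast

theorem IsAvoidingChain.card_le_rnk_wordProd {D : Finset (ℕ × ℕ)}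
    (hpos : ∀ p ∈ D, 1 ≤ p.1 ∧ 1 ≤ p.2) {i j : ℕ} {C : Finset (ℕ × ℕ)}
    (hC : IsAvoidingChain D 0 i 0 j C) : C.card ≤ rnk (wordProd (pdWord D)) i j := by
  simpa using chainBound_wordProd D hpos i 0 j C (Nat.zero_le j)
    (fun p hp => .inr (hpos p hp).2) hC

/-! ### Cutting corners off boundary paths -/

/-- A lattice path from `(0, 0)` to `(m / 2, m / 2)` staying weakly below the main diagonal: `p k`
is the row of its `k`-th point, whose column is `k - p k`. -/
structure IsBoundaryPath (m : ℕ) (p : ℕ → ℕ) : Prop where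
  step : ∀ k < m, p k ≤ p (k + 1) ∧ p (k + 1) ≤ p k + 1
  le : ∀ k ≤ m, p k ≤ k
  ge : ∀ k ≤ m, k ≤ 2 * p k
  top : 2 * p m = m

/-- The path `p` turns at its `k`-th point, coming down a column and leaving along a row. -/
structure IsCorner (m : ℕ) (p : ℕ → ℕ) (k : ℕ) : Prop where
  pos : 1 ≤ k
  lt : k < m
  le : p k ≤ k
  prev : p (k - 1) + 1 = p k
  next : p (k + 1) = p k

/-- The box in the angle of the corner of `p` at its `k`-th point. -/
def cornerBox (p : ℕ → ℕ) (k : ℕ) : ℕ × ℕ := (p k, k - p k + 1)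

/-- The path `p` rerouted around the other two sides of `cornerBox p k`. -/
def cutCorner (p : ℕ → ℕ) (k : ℕ) : ℕ → ℕ := Function.update p k (p k - 1)

theorem cutCorner_self (p : ℕ → ℕ) (k : ℕ) : cutCorner p k k = p k - 1 := Function.update_self ..

theorem cutCorner_of_ne (p : ℕ → ℕ) {k t : ℕ} (h : t ≠ k) : cutCorner p k t = p t :=
  Function.update_of_ne h ..

theorem cutCorner_le (p : ℕ → ℕ) (k t : ℕ) : cutCorner p k t ≤ p t := by
  rcases eq_or_ne t k with rfl | h
  · exact (cutCorner_self p t).trans_le (Nat.sub_le _ 1)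
  · exact (cutCorner_of_ne p h).le

theorem IsCorner.cornerBox_pos {m k : ℕ} {p : ℕ → ℕ} (hk : IsCorner m p k) :
    1 ≤ (cornerBox p k).1 ∧ 1 ≤ (cornerBox p k).2 := by
  have := hk.prev
  simp only [cornerBox]
  omega

theorem IsCorner.cornerBox_letter {m k : ℕ} {p : ℕ → ℕ} (hk : IsCorner m p k) :
    (cornerBox p k).1 + (cornerBox p k).2 - 1 = k := by
  have := hk.le
  simp only [cornerBox]
  omega

namespace IsBoundaryPath

variable {m : ℕ} {p : ℕ → ℕ}

theorem le_of_le (hp : IsBoundaryPath m p) {a b : ℕ} (hab : a ≤ b) (hb : b ≤ m) :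
    p a ≤ p b ∧ p b ≤ p a + (b - a) := by
  induction b, hab using Nat.le_induction with
  | base => simp
  | succ b hab ih =>
    have := ih (by omega)
    have := hp.step b (by omega)
    omega

theorem cutCorner {k : ℕ} (hp : IsBoundaryPath m p) (hk : IsCorner m p k)
    (hlt : k + 2 ≤ 2 * p k) : IsBoundaryPath m (cutCorner p k) := by
  have hcut : ∀ t, Paper.cutCorner p k t = if t = k then p k - 1 else p t :=
    fun t => Function.update_apply ..
  obtain ⟨hpos, hkm, hle, hprev, hnext⟩ := hk
  constructor
  · intro t ht
    have := hp.step t ht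
    rw [hcut, hcut]
    split_ifs with h1 h2 h2
    · omega
    · subst h1; omega
    · subst h2
      rw [Nat.add_sub_cancel] at hprev
      omega
    · omega
  · exact fun t ht => (cutCorner_le p k t).trans (hp.le t ht)
  · intro t ht
    have := hp.ge t ht
    rw [hcut]
    split_ifs <;> omega
  · rw [hcut, if_neg hkm.ne', hp.top]

/-- The corner farthest from the diagonal is the one to cut. -/
theorem exists_isCorner (hp : IsBoundaryPath m p) (hne : ∃ k ≤ m, k + 2 ≤ 2 * p k) :
    ∃ k, IsCorner m p k ∧ k + 2 ≤ 2 * p k := by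
  obtain ⟨k₀, hk₀, hgt₀⟩ := hne
  obtain ⟨k, hk, hmax⟩ := Finset.exists_max_image (Finset.range (m + 1))
    (fun k => 2 * p k - k) ⟨0, Finset.mem_range.mpr m.succ_pos⟩
  simp only [Finset.mem_range, Nat.lt_succ_iff] at hk hmax
  have hgt : k + 2 ≤ 2 * p k := by have := hmax k₀ hk₀; omega
  have hkm : k < m := hk.lt_of_ne fun h => by have := hp.top; subst h; omega
  have hle := hp.le k hk
  have hprev := hp.step (k - 1) (by omega)
  have hnext := hp.step k hkm
  have hmax_prev := hmax (k - 1) (by omega)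
  have hmax_next := hmax (k + 1) hkm
  rw [Nat.sub_add_cancel (by omega)] at hprev
  exact ⟨k, ⟨by omega, hkm, hle, by omega, by omega⟩, hgt⟩

@[elab_as_elim]
theorem induction_cutCorner {motive : ∀ p, IsBoundaryPath m p → Prop}
    (staircase : ∀ p hp, (∀ k ≤ m, 2 * p k ≤ k + 1) → motive p hp)
    (cut : ∀ p hp k, IsCorner m p k → k + 2 ≤ 2 * p k →
      ∀ hp' : IsBoundaryPath m (Paper.cutCorner p k), motive _ hp' → motive p hp)
    (p : ℕ → ℕ) (hp : IsBoundaryPath m p) : motive p hp := by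
  induction hN : ∑ k ∈ Finset.range (m + 1), p k using Nat.strong_induction_on generalizing p with
  | _ N ih =>
    by_cases hne : ∃ k ≤ m, k + 2 ≤ 2 * p k
    · obtain ⟨k, hk, hgt⟩ := hp.exists_isCorner hne
      have hp' := hp.cutCorner hk hgt
      refine cut p hp k hk hgt hp' (ih _ ?_ _ hp' rfl)
      rw [← hN]
      refine Finset.sum_lt_sum (fun t _ => cutCorner_le p k t)
        ⟨k, Finset.mem_range.mpr (hk.lt.trans m.lt_succ_self), ?_⟩
      have := hk.prev
      rw [cutCorner_self]
      omega
    · push Not at hne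
      exact staircase p hp fun k hk => Nat.le_of_lt_succ (hne k hk)

end IsBoundaryPath

/-- The ranks of `w` bound the chains avoiding `U` in every rectangle with its south-west corner
`(p k, k - p k)` on the path `p` and its north-east corner `(l - q l, q l)` on the transpose of the
path `q`. -/
def PathBound (m : ℕ) (U : Set (ℕ × ℕ)) (p q : ℕ → ℕ) (w : Equiv.Perm ℕ) : Prop :=
  ∀ (k l : ℕ) (C : Finset (ℕ × ℕ)), k ≤ m → l ≤ m → l - q l ≤ p k → k - p k ≤ q l →
    IsAvoidingChain U (l - q l) (p k) (k - p k) (q l) C →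
    (k - p k) + (l - q l) + C.card ≤ rnk w k l

/-! ### Simple transpositions and fixed-point-free involutions -/

theorem swap_mul_conj_mul_swap (y : Equiv.Perm ℕ) (k : ℕ) :
    Equiv.swap k (k + 1) * (Equiv.swap k (k + 1) * y * Equiv.swap k (k + 1)) *
      Equiv.swap k (k + 1) = y := by
  simp only [mul_assoc, Equiv.swap_mul_self, mul_one, Equiv.swap_mul_self_mul]

theorem conj_swap_apply_lt {y : Equiv.Perm ℕ} {k : ℕ} (hdesc : y (k + 1) < y k)
    (hne : y k ≠ k + 1) :
    (Equiv.swap k (k + 1) * y * Equiv.swap k (k + 1)) k <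
      (Equiv.swap k (k + 1) * y * Equiv.swap k (k + 1)) (k + 1) := by
  simp only [Equiv.Perm.mul_apply, Equiv.swap_apply_left, Equiv.swap_apply_right]
  simp only [Equiv.swap_apply_def]
  split_ifs <;> omega

theorem conj_swap_mem_IFPFm {y : Equiv.Perm ℕ} {m k : ℕ} (hy : y ∈ IFPFm m) (hk : 1 ≤ k)
    (hkm : k < m) : Equiv.swap k (k + 1) * y * Equiv.swap k (k + 1) ∈ IFPFm m := by
  obtain ⟨hzero, hinv, hfix, htail⟩ := hy
  have hs : ∀ i, i < k ∨ k + 1 < i → Equiv.swap k (k + 1) i = i := fun i hi =>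
    Equiv.swap_apply_of_ne_of_ne (by omega) (by omega)
  refine ⟨?_, ?_, fun i hi him hfixed => ?_, fun i hi => ?_⟩
  · simp only [Equiv.Perm.mul_apply, hs 0 (by omega), hzero]
  · simp only [mul_assoc, Equiv.swap_mul_self_mul]
    rw [← mul_assoc y y, hinv, one_mul, Equiv.swap_mul_self]
  · rw [Equiv.Perm.mul_apply, Equiv.Perm.mul_apply, Equiv.swap_apply_eq_iff] at hfixed
    refine hfix _ ?_ ?_ hfixed <;>
    · rw [Equiv.swap_apply_def]
      split_ifs <;> omega
  · simp only [Equiv.Perm.mul_apply, hs i (by omega), htail i hi]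

theorem encard_inversionSet_eq_conj_swap_add {y : Equiv.Perm ℕ} {m k : ℕ} (hy : y ∈ IFPFm m)
    (hk : 1 ≤ k) (hkm : k < m) (hdesc : y (k + 1) < y k) (hne : y k ≠ k + 1) :
    (inversionSet y).encard =
      (inversionSet (Equiv.swap k (k + 1) * y * Equiv.swap k (k + 1))).encard + 2 := by
  have hconj := conj_swap_mem_IFPFm hy hk hkm
  rw [← encard_inversionSet_conj_swap hconj.2.1 (conj_swap_apply_lt hdesc hne)
    (hconj.2.2.1 k hk hkm.le), swap_mul_conj_mul_swap]

theorem rnk_mul_swap_of_apply_eq {y : Equiv.Perm ℕ} {k k' l : ℕ} (hy : y * y = 1) (hk : 1 ≤ k)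
    (hyk : y k = k + 1) (hne : k' ≠ k ∨ l ≠ k) :
    rnk (y * Equiv.swap k (k + 1)) k' l = rnk y k' l := by
  have hyk' : y (k + 1) = k := by rw [← hyk, apply_apply_of_mul_self_eq_one hy]
  have hcomm : (y * Equiv.swap k (k + 1))⁻¹ = y * Equiv.swap k (k + 1) := by
    rw [Equiv.mul_swap_eq_swap_mul, hyk, hyk', mul_inv_rev, inv_eq_of_mul_eq_one_right hy,
      Equiv.swap_inv, Equiv.mul_swap_eq_swap_mul, hyk, hyk', Equiv.swap_comm]
  rcases hne with hne | hne
  · exact rnk_mul_swap y hk hne l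
  · rw [← rnk_inv, hcomm, rnk_mul_swap y hk hne, rnk_comm hy]

theorem rnk_mul_swap_self_of_apply_eq {y : Equiv.Perm ℕ} {k : ℕ} (hy : y * y = 1) (hk : 1 ≤ k)
    (hyk : y k = k + 1) : rnk (y * Equiv.swap k (k + 1)) k k = rnk y k k + 1 := by
  have hyk' : y (k + 1) = k := by rw [← hyk, apply_apply_of_mul_self_eq_one hy]
  rw [rnk_eq_rnk_pred_add _ hk, rnk_eq_rnk_pred_add y hk, rnk_mul_swap y hk (by omega),
    Equiv.Perm.mul_apply, Equiv.swap_apply_left, hyk, hyk', if_pos ⟨hk, le_rfl⟩,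
    if_neg (by omega), add_zero]

namespace PathBound

variable {m k : ℕ} {U : Set (ℕ × ℕ)} {p q : ℕ → ℕ} {w w' y : Equiv.Perm ℕ}

theorem symm (hU : ∀ x ∈ U, x.swap ∈ U) (h : PathBound m U p q w) : PathBound m U q p w⁻¹ := by
  intro k l C hk hl h1 h2 hC
  have := h l k _ hl hk h2 h1 (hC.image_swap hU)
  rw [card_image_swap] at this
  rw [rnk_inv]
  omega

theorem cutCorner_of_lt (h : PathBound m U p q w) (hk : IsCorner m p k)
    (hrnk : ∀ k' ≠ k, ∀ l, rnk w' k' l = rnk w k' l) (hpos : 1 ≤ w' k)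
    (hasc : w' k < w' (k + 1)) : PathBound m U (cutCorner p k) q w' := by
  intro k' l C hk' hl h1 h2 hC
  by_cases hkk : k' = k
  swap
  · rw [cutCorner_of_ne p hkk] at *
    exact hrnk k' hkk l ▸ h k' l C hk' hl h1 h2 hC
  subst hkk
  obtain ⟨hkpos, hkm, hle, hprev, hnext⟩ := hk
  rw [cutCorner_self] at *
  have hbelow := h (k' - 1) l C (by omega) hl (by omega) (by omega)
    (hC.of_le le_rfl (by omega) (by omega) le_rfl)
  have habove := h (k' + 1) l C (by omega) hl (by omega) (by omega)
    (hC.of_le le_rfl (by omega) (by omega) le_rfl)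
  rw [← hrnk _ (by omega)] at hbelow habove
  have hpred := rnk_eq_rnk_pred_add w' hkpos l
  have hsucc := rnk_succ w' k' l
  split_ifs at hpred hsucc <;> omega

theorem cutCorner_of_notMem (h : PathBound m U p q w) (hk : IsCorner m p k)
    (hbox : cornerBox p k ∉ U) : PathBound m U (cutCorner p k) q w := by
  intro k' l C hk' hl h1 h2 hC
  by_cases hkk : k' = k
  swap
  · rw [cutCorner_of_ne p hkk] at *
    exact h k' l C hk' hl h1 h2 hC
  subst hkk
  obtain ⟨-, -, hle, hprev, -⟩ := hk
  rw [cutCorner_self] at *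
  have hnew : cornerBox p k' ∉ C := fun hmem => by
    have := hC.row _ hmem
    simp only [cornerBox] at this
    omega
  have hlong := hC.insert_southwest (c' := k' - p k') hbox (by simp only [cornerBox]; omega)
    (by simp only [cornerBox]; omega) (by simp only [cornerBox]; omega) h1 h2
  have := h k' l _ hk' hl (by omega) (by omega) hlong
  rw [Finset.card_insert_of_notMem hnew] at this
  omega

theorem cutCorner_cutCorner_of_notMem (hU : ∀ x ∈ U, x.swap ∈ U) (hy : y * y = 1)
    (h : PathBound m U p p y) (hk : IsCorner m p k) (hbox : cornerBox p k ∉ U) :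
    PathBound m U (cutCorner p k) (cutCorner p k) y := by
  have hcut := ((h.cutCorner_of_notMem hk hbox).symm hU).cutCorner_of_notMem hk hbox
  rwa [inv_eq_of_mul_eq_one_right hy] at hcut

theorem cutCorner_cutCorner_of_lt (hU : ∀ x ∈ U, x.swap ∈ U) (hy : y ∈ IFPFm m)
    (h : PathBound m U p p y) (hk : IsCorner m p k) (hasc : y k < y (k + 1)) :
    PathBound m U (cutCorner p k) (cutCorner p k) y := by
  have hinv := inv_eq_of_mul_eq_one_right hy.2.1
  have hpos := one_le_apply hy.1 hk.pos
  have hcut := (h.cutCorner_of_lt hk (fun _ _ _ => rfl) hpos hasc).symm hU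
  rw [hinv] at hcut
  exact hcut.cutCorner_of_lt hk (fun _ _ _ => rfl) hpos hasc

theorem cutCorner_of_gt (hU : ∀ x ∈ U, x.swap ∈ U) (hy : y ∈ IFPFm m)
    (h : PathBound m U p p y) (hk : IsCorner m p k) (hdesc : y (k + 1) < y k) :
    PathBound m U p (cutCorner p k) (Equiv.swap k (k + 1) * y) := by
  have hcut := (h.cutCorner_of_lt (w' := y * Equiv.swap k (k + 1)) hk
    (fun k' hk' l => rnk_mul_swap y hk.pos hk' l)
    (by simpa using one_le_apply hy.1 (Nat.le_add_left 1 k)) (by simpa using hdesc)).symm hU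
  rwa [mul_inv_rev, inv_eq_of_mul_eq_one_right hy.2.1, Equiv.swap_inv] at hcut

theorem cutCorner_cutCorner_of_gt (hU : ∀ x ∈ U, x.swap ∈ U) (hy : y ∈ IFPFm m)
    (h : PathBound m U p p y) (hk : IsCorner m p k) (hdesc : y (k + 1) < y k)
    (hne : y k ≠ k + 1) :
    PathBound m U (cutCorner p k) (cutCorner p k)
      (Equiv.swap k (k + 1) * y * Equiv.swap k (k + 1)) := by
  refine (h.cutCorner_of_gt hU hy hk hdesc).cutCorner_of_lt hk
    (fun k' hk' l => rnk_mul_swap _ hk.pos hk' l) ?_ ?_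
  · exact one_le_apply (conj_swap_mem_IFPFm hy hk.pos hk.lt).1 hk.pos
  · exact conj_swap_apply_lt hdesc hne

/-- Here a single corner cut loses one unit of rank at `(k, k)`. It is regained by parity: the rank
is even, and odd chains in a symmetric square are never maximal. -/
theorem cutCorner_cutCorner_of_apply_eq (hU : ∀ x ∈ U, x.swap ∈ U) (hdiag : ∀ i, (i, i) ∈ U)
    (hy : y ∈ IFPFm m) (h : PathBound m U p p y) (hk : IsCorner m p k) (hyk : y k = k + 1) :
    PathBound m U (cutCorner p k) (cutCorner p k) y := by
  have hyk' : y (k + 1) = k := by rw [← hyk, apply_apply_of_mul_self_eq_one hy.2.1]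
  have hcut : PathBound m U (cutCorner p k) (cutCorner p k) (y * Equiv.swap k (k + 1)) := by
    have h' := (h.cutCorner_of_gt hU hy hk (by omega)).cutCorner_of_lt hk (fun _ _ _ => rfl)
      (by simp [hyk, hk.pos]) (by simp [hyk, hyk']) |>.symm hU
    rwa [mul_inv_rev, inv_eq_of_mul_eq_one_right hy.2.1, Equiv.swap_inv] at h'
  intro k' l C hk' hl h1 h2 hC
  have hbound := hcut k' l C hk' hl h1 h2 hC
  by_cases hne : k' ≠ k ∨ l ≠ k
  · rwa [rnk_mul_swap_of_apply_eq hy.2.1 hk.pos hyk hne] at hbound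
  push Not at hne
  obtain ⟨rfl, rfl⟩ := hne
  rw [rnk_mul_swap_self_of_apply_eq hy.2.1 hk.pos hyk] at hbound
  obtain ⟨r, hr⟩ := even_rnk_self (k := l) hy.2.1 fun i hi hil => hy.2.2.1 i hi (hil.trans hl)
  rcases Nat.even_or_odd C.card with ⟨e, he⟩ | hodd
  · omega
  · obtain ⟨C', hC', hlt⟩ := hC.exists_card_lt_of_odd hU hdiag hodd
    have := hcut l l C' hk' hl h1 h2 hC'
    rw [rnk_mul_swap_self_of_apply_eq hy.2.1 hk.pos hyk] at this
    omega

theorem cutCorner_cutCorner (hU : ∀ x ∈ U, x.swap ∈ U) (hdiag : ∀ i, (i, i) ∈ U)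
    (hy : y ∈ IFPFm m) (h : PathBound m U p p y) (hk : IsCorner m p k) :
    PathBound m U (cutCorner p k) (cutCorner p k) y ∨
      (cornerBox p k ∈ U ∧ y (k + 1) < y k ∧ y k ≠ k + 1 ∧
        PathBound m U (cutCorner p k) (cutCorner p k)
          (Equiv.swap k (k + 1) * y * Equiv.swap k (k + 1))) := by
  by_cases hbox : cornerBox p k ∈ U
  swap
  · exact .inl (h.cutCorner_cutCorner_of_notMem hU hy.2.1 hk hbox)
  rcases lt_trichotomy (y k) (y (k + 1)) with hlt | heq | hgt
  · exact .inl (h.cutCorner_cutCorner_of_lt hU hy hk hlt)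
  · exact absurd (y.injective heq) (by omega)
  by_cases hyk : y k = k + 1
  · exact .inl (h.cutCorner_cutCorner_of_apply_eq hU hdiag hy hk hyk)
  · exact .inr ⟨hbox, hgt, hyk, h.cutCorner_cutCorner_of_gt hU hy hk hgt hyk⟩

end PathBound

/-! ### Building symmetric pipe dreams box by box -/

/-- The boxes `(1, 1), …, (h, h)`, a pipe dream of the restriction of `1_FPF` to `[2h]`. -/
def diagonalBoxes (h : ℕ) : Finset (ℕ × ℕ) := (Finset.Icc 1 h).image fun t => (t, t)

/-- The symmetric set of boxes with part `E` below the diagonal and diagonal part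
`diagonalBoxes h`. -/
def symmetrize (h : ℕ) (E : Finset (ℕ × ℕ)) : Finset (ℕ × ℕ) :=
  E ∪ E.image Prod.swap ∪ diagonalBoxes h

theorem mem_diagonalBoxes {h : ℕ} {x : ℕ × ℕ} :
    x ∈ diagonalBoxes h ↔ 1 ≤ x.1 ∧ x.1 ≤ h ∧ x.1 = x.2 := by
  simp only [diagonalBoxes, Finset.mem_image, Finset.mem_Icc]
  constructor
  · rintro ⟨t, ht, rfl⟩
    exact ⟨ht.1, ht.2, rfl⟩
  · rintro ⟨hpos, hle, heq⟩
    exact ⟨x.1, ⟨hpos, hle⟩, Prod.ext rfl heq⟩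

theorem mem_symmetrize {h : ℕ} {E : Finset (ℕ × ℕ)} {x : ℕ × ℕ} :
    x ∈ symmetrize h E ↔ x ∈ E ∨ x.swap ∈ E ∨ (1 ≤ x.1 ∧ x.1 ≤ h ∧ x.1 = x.2) := by
  simp only [symmetrize, Finset.mem_union, mem_image_swap, mem_diagonalBoxes, or_assoc]

theorem symmetrize_empty (h : ℕ) : symmetrize h ∅ = diagonalBoxes h := by simp [symmetrize]

theorem image_swap_symmetrize (h : ℕ) (E : Finset (ℕ × ℕ)) :
    (symmetrize h E).image Prod.swap = symmetrize h E := by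
  ext x
  simp only [mem_image_swap, mem_symmetrize, Prod.swap_swap, Prod.fst_swap, Prod.snd_swap]
  grind

theorem diagonalBoxes_succ (h : ℕ) :
    diagonalBoxes (h + 1) = insert (h + 1, h + 1) (diagonalBoxes h) := by
  rw [diagonalBoxes, ← Finset.insert_Icc_right_eq_Icc_add_one h.succ_pos, Finset.image_insert,
    diagonalBoxes]

theorem wordProd_pdWord_diagonalBoxes_succ (h : ℕ) :
    wordProd (pdWord (diagonalBoxes (h + 1))) =
      wordProd (pdWord (diagonalBoxes h)) * Equiv.swap (2 * h + 1) (2 * h + 1 + 1) := by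
  rw [diagonalBoxes_succ, wordProd_pdWord_insert_southwest (by simp)]
  · rw [show h + 1 + (h + 1) - 1 = 2 * h + 1 by omega]
  · intro x hx
    rw [mem_diagonalBoxes] at hx
    exact .inl (by omega)

theorem wordProd_pdWord_diagonalBoxes_apply (h i : ℕ) :
    wordProd (pdWord (diagonalBoxes h)) i = if 1 ≤ i ∧ i ≤ 2 * h then oneFPF i else i := by
  induction h generalizing i with
  | zero =>
    rw [if_neg (by omega)]
    simp [diagonalBoxes, pdWord_empty, wordProd_nil]
  | succ h ih =>
    rw [wordProd_pdWord_diagonalBoxes_succ, Equiv.Perm.mul_apply, ih]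
    simp only [Equiv.swap_apply_def, oneFPF]
    split_ifs <;> omega

theorem card_diagonalBoxes_le (h : ℕ) : ((diagonalBoxes h).card : ℕ∞) ≤
    (inversionSet (wordProd (pdWord (diagonalBoxes h)))).encard := by
  induction h with
  | zero => simp [diagonalBoxes]
  | succ h ih =>
    have hasc : wordProd (pdWord (diagonalBoxes h)) (2 * h + 1) <
        wordProd (pdWord (diagonalBoxes h)) (2 * h + 1 + 1) := by
      simp only [wordProd_pdWord_diagonalBoxes_apply]
      split_ifs <;> omega
    rw [wordProd_pdWord_diagonalBoxes_succ, encard_inversionSet_mul_swap hasc]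
    calc ((diagonalBoxes (h + 1)).card : ℕ∞)
      _ ≤ ((diagonalBoxes h).card + 1 : ℕ) := by
        rw [diagonalBoxes_succ]
        exact_mod_cast Finset.card_insert_le ..
      _ ≤ _ := by
        push_cast
        gcongr

theorem apply_two_mul_of_le_rnk {y : Equiv.Perm ℕ} {h : ℕ} (hy : y ∈ IFPFm (2 * h))
    (hrnk : ∀ t ≤ h, 2 * t ≤ rnk y (2 * t) (2 * t)) {t : ℕ} (ht : 1 ≤ t) (hth : t ≤ h) :
    y (2 * t) = 2 * t - 1 := by
  have hle := le_rnk_iff.mp (hrnk t hth) (2 * t) (by omega) le_rfl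
  have hne := hy.2.2.1 (2 * t) (by omega) (by omega)
  rcases Nat.lt_or_ge (2 * (t - 1)) (y (2 * t)) with hgt | hge
  · omega
  · have := le_rnk_iff.mp (hrnk (t - 1) (by omega)) _ hle.1 hge
    rw [apply_apply_of_mul_self_eq_one hy.2.1] at this
    omega

theorem wordProd_pdWord_diagonalBoxes_eq {y : Equiv.Perm ℕ} {h : ℕ} (hy : y ∈ IFPFm (2 * h))
    (hrnk : ∀ t ≤ h, 2 * t ≤ rnk y (2 * t) (2 * t)) :
    wordProd (pdWord (diagonalBoxes h)) = y := by
  have hyy := apply_apply_of_mul_self_eq_one hy.2.1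
  ext i
  rw [wordProd_pdWord_diagonalBoxes_apply, oneFPF]
  split_ifs with hi hodd
  · have := apply_two_mul_of_le_rnk hy hrnk (t := (i + 1) / 2) (by omega) (by omega)
    rw [show 2 * ((i + 1) / 2) = i + 1 by omega] at this
    rw [← hyy (i + 1), this, Nat.add_sub_cancel]
  · have := apply_two_mul_of_le_rnk hy hrnk (t := i / 2) (by omega) (by omega)
    rw [show 2 * (i / 2) = i by omega] at this
    exact this.symm
  · rcases Nat.eq_zero_or_pos i with rfl | hpos
    · exact hy.1.symm
    · exact (hy.2.2.2 i (by omega)).symm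

section symmetrize

variable {h : ℕ} {E : Finset (ℕ × ℕ)} {q : ℕ × ℕ}

theorem one_le_of_mem_symmetrize (hE : ∀ x ∈ E, 1 ≤ x.2 ∧ x.2 < x.1) {x : ℕ × ℕ}
    (hx : x ∈ symmetrize h E) : 1 ≤ x.1 ∧ 1 ≤ x.2 := by
  rcases mem_symmetrize.mp hx with hx | hx | hx
  · have := hE x hx
    omega
  · have := hE _ hx
    simp only [Prod.fst_swap, Prod.snd_swap] at this
    omega
  · omega

theorem filter_symmetrize (hE : ∀ x ∈ E, x.2 < x.1) :
    {x ∈ symmetrize h E | x.2 < x.1} = E := by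
  ext x
  rw [Finset.mem_filter, mem_symmetrize]
  refine ⟨?_, fun hx => ⟨.inl hx, hE x hx⟩⟩
  rintro ⟨hx | hx | hx, hlt⟩
  · exact hx
  · exact absurd (hE _ hx) hlt.asymm
  · omega

theorem symmetrize_insert (h : ℕ) (E : Finset (ℕ × ℕ)) (q : ℕ × ℕ) :
    symmetrize h (insert q E) = insert q (insert q.swap (symmetrize h E)) := by
  simp only [symmetrize, Finset.image_insert, Finset.insert_union, Finset.union_insert,
    Finset.insert_comm q]

theorem card_symmetrize_insert_le (h : ℕ) (E : Finset (ℕ × ℕ)) (q : ℕ × ℕ) :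
    (symmetrize h (insert q E)).card ≤ (symmetrize h E).card + 2 := by
  rw [symmetrize_insert]
  exact (Finset.card_insert_le ..).trans (Nat.succ_le_succ (Finset.card_insert_le ..))

theorem wordProd_pdWord_symmetrize_insert (hE : ∀ x ∈ E, 1 ≤ x.2 ∧ x.2 < x.1)
    (hq : 1 ≤ q.2 ∧ q.2 < q.1) (hext : ∀ x ∈ E, x.1 < q.1 ∨ q.2 < x.2) :
    wordProd (pdWord (symmetrize h (insert q E))) =
      Equiv.swap (q.1 + q.2 - 1) (q.1 + q.2 - 1 + 1) * wordProd (pdWord (symmetrize h E)) *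
        Equiv.swap (q.1 + q.2 - 1) (q.1 + q.2 - 1 + 1) := by
  have hsymm : ∀ x ∈ symmetrize h E, x.1 < q.1 ∨ q.2 < x.2 := by
    intro x hx
    rcases mem_symmetrize.mp hx with hx | hx | hx
    · exact hext x hx
    · have := hE _ hx
      have := hext _ hx
      simp only [Prod.fst_swap, Prod.snd_swap] at *
      omega
    · omega
  rw [symmetrize_insert, wordProd_pdWord_insert_southwest (by omega),
    wordProd_pdWord_insert_northeast (by simp; omega) (fun _ => one_le_of_mem_symmetrize hE)]
  · rw [Prod.fst_swap, Prod.snd_swap, add_comm q.2]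
  · intro x hx
    rw [← image_swap_symmetrize, mem_image_swap] at hx
    exact (hsymm _ hx).symm
  · intro x hx
    rcases Finset.mem_insert.mp hx with rfl | hx
    · exact .inl hq.2
    · exact hsymm x hx

end symmetrize

/-- The boxes strictly below the main diagonal and above the path `p`. -/
def boxesAbove (h : ℕ) (p : ℕ → ℕ) : Set (ℕ × ℕ) :=
  {x | 1 ≤ x.2 ∧ x.2 < x.1 ∧ x.1 + x.2 ≤ 2 * h ∧ x.1 ≤ p (x.1 + x.2 - 1)}

theorem boxesAbove_cutCorner_subset (h : ℕ) (p : ℕ → ℕ) (k : ℕ) :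
    boxesAbove h (cutCorner p k) ⊆ boxesAbove h p :=
  fun _ hx => ⟨hx.1, hx.2.1, hx.2.2.1, hx.2.2.2.trans (cutCorner_le p k _)⟩

theorem IsCorner.cornerBox_mem_boxesAbove {h k : ℕ} {p : ℕ → ℕ} (hk : IsCorner (2 * h) p k)
    (hlt : k + 2 ≤ 2 * p k) : cornerBox p k ∈ boxesAbove h p := by
  have hle := hk.le
  have hkm := hk.lt
  refine ⟨hk.cornerBox_pos.2, ?_, ?_, ?_⟩
  · simp only [cornerBox]; omega
  · simp only [cornerBox]; omega
  · rw [hk.cornerBox_letter, cornerBox]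

theorem lt_or_lt_of_mem_boxesAbove_cutCorner {h k : ℕ} {p : ℕ → ℕ}
    (hp : IsBoundaryPath (2 * h) (cutCorner p k)) (hk : IsCorner (2 * h) p k) {x : ℕ × ℕ}
    (hx : x ∈ boxesAbove h (cutCorner p k)) :
    x.1 < (cornerBox p k).1 ∨ (cornerBox p k).2 < x.2 := by
  obtain ⟨hpos, hlt, hle, habove⟩ := hx
  obtain ⟨-, hkm, hkle, hprev, -⟩ := hk
  simp only [cornerBox]
  by_contra! hcon
  rcases Nat.le_total (x.1 + x.2 - 1) k with hxk | hxk
  · have := (hp.le_of_le hxk hkm.le).1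
    rw [cutCorner_self] at this
    omega
  · have := (hp.le_of_le hxk (by omega)).2
    rw [cutCorner_self] at this
    omega

theorem PathBound.two_mul_le_rnk {h : ℕ} {U : Set (ℕ × ℕ)} {p : ℕ → ℕ} {y : Equiv.Perm ℕ}
    (hbound : PathBound (2 * h) U p p y) (hp : IsBoundaryPath (2 * h) p)
    (hstair : ∀ k ≤ 2 * h, 2 * p k ≤ k + 1) {t : ℕ} (ht : t ≤ h) :
    2 * t ≤ rnk y (2 * t) (2 * t) := by
  have hpt : p (2 * t) = t := by
    have := hstair (2 * t) (by omega)
    have := hp.ge (2 * t) (by omega)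
    omega
  have := hbound (2 * t) (2 * t) ∅ (by omega) (by omega) (by omega) (by omega) .empty
  rw [hpt, Finset.card_empty] at this
  omega

/-- Conjugating by the letter of the corner box, and adding that box and its mirror image to the
pipe dream, undoes one cut. -/
theorem PathBound.exists_symmetrize {h : ℕ} {U : Set (ℕ × ℕ)} (hU : ∀ x ∈ U, x.swap ∈ U)
    (hdiag : ∀ i, (i, i) ∈ U) {p : ℕ → ℕ} (hp : IsBoundaryPath (2 * h) p) {y : Equiv.Perm ℕ}
    (hy : y ∈ IFPFm (2 * h)) (hbound : PathBound (2 * h) U p p y) :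
    ∃ E : Finset (ℕ × ℕ), ↑E ⊆ U ∩ boxesAbove h p ∧ wordProd (pdWord (symmetrize h E)) = y ∧
      ((symmetrize h E).card : ℕ∞) ≤ (inversionSet y).encard := by
  induction p, hp using IsBoundaryPath.induction_cutCorner generalizing y with
  | staircase p hp hstair =>
    have hword := wordProd_pdWord_diagonalBoxes_eq hy fun t => hbound.two_mul_le_rnk hp hstair
    refine ⟨∅, by simp, by rwa [symmetrize_empty], ?_⟩
    rw [symmetrize_empty, ← hword]
    exact card_diagonalBoxes_le h
  | cut p _ k hk hlt hp' ih =>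
    have hsub := Set.inter_subset_inter_right U (boxesAbove_cutCorner_subset h p k)
    rcases hbound.cutCorner_cutCorner hU hdiag hy hk with hcut | ⟨hbox, hdesc, hne, hcut⟩
    · obtain ⟨E, hE, hword⟩ := ih hy hcut
      exact ⟨E, hE.trans hsub, hword⟩
    obtain ⟨E, hE, hword, hcard⟩ := ih (conj_swap_mem_IFPFm hy hk.pos hk.lt) hcut
    have hq := hk.cornerBox_mem_boxesAbove hlt
    refine ⟨insert (cornerBox p k) E, ?_, ?_, ?_⟩
    · rw [Finset.coe_insert]
      exact Set.insert_subset ⟨hbox, hq⟩ (hE.trans hsub)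
    · rw [wordProd_pdWord_symmetrize_insert (fun x hx => ⟨(hE hx).2.1, (hE hx).2.2.1⟩)
        ⟨hq.1, hq.2.1⟩ fun x hx => lt_or_lt_of_mem_boxesAbove_cutCorner hp' hk (hE hx).2,
        hk.cornerBox_letter, hword, swap_mul_conj_mul_swap]
    · rw [encard_inversionSet_eq_conj_swap_add hy hk.pos hk.lt hdesc hne]
      calc ((symmetrize h (insert (cornerBox p k) E)).card : ℕ∞)
        _ ≤ ((symmetrize h E).card + 2 : ℕ) := by exact_mod_cast card_symmetrize_insert_le ..
        _ ≤ _ := by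
          push_cast
          gcongr

/-! ### Ranks beyond the Rothe diagram -/

/-- The rank of `w` at `(k, l)` bounds the chains in `[k] × [l]` avoiding `U`. -/
def RankBound (U : Set (ℕ × ℕ)) (w : Equiv.Perm ℕ) (k l : ℕ) : Prop :=
  ∀ C, IsAvoidingChain U 0 k 0 l C → C.card ≤ rnk w k l

section Tail

variable {z : Equiv.Perm ℕ} {m : ℕ}

theorem lt_oneFPF {i : ℕ} (hm : Even m) (hi : m < i) : m < oneFPF i := by
  rw [Nat.even_iff] at hm
  unfold oneFPF
  split_ifs <;> omega

theorem oneFPF_oneFPF {i : ℕ} (hi : 1 ≤ i) : oneFPF (oneFPF i) = i := by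
  unfold oneFPF
  split_ifs <;> omega

theorem apply_le_of_tail (hz : z * z = 1) (hm : Even m) (htail : ∀ i, m < i → z i = oneFPF i)
    {i : ℕ} (hi : i ≤ m) : z i ≤ m := by
  by_contra! hlt
  have := lt_oneFPF hm hlt
  rw [← htail _ hlt, apply_apply_of_mul_self_eq_one hz] at this
  omega

theorem le_rnk_of_tail (hzero : z 0 = 0) (hz : z * z = 1) (hm : Even m)
    (htail : ∀ i, m < i → z i = oneFPF i) {k l : ℕ} (hlk : l ≤ k) (hmk : m < k)
    (hodd : l = k → Even k) : l ≤ rnk z l k := by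
  refine le_rnk_iff.mpr fun a ha hal => ⟨one_le_apply hzero ha, ?_⟩
  rcases le_or_gt a m with ham | ham
  · exact (apply_le_of_tail hz hm htail ham).trans hmk.le
  · rw [Nat.even_iff] at hodd
    rw [htail a ham, oneFPF]
    split_ifs <;> omega

/-- Past `m` the ranks are as large as a chain can be, except in odd squares, where they fall short
by one and so do the chains. -/
theorem IsAvoidingChain.add_card_le_rnk_of_tail_of_le {U : Set (ℕ × ℕ)} {a b c d : ℕ}
    {C : Finset (ℕ × ℕ)} (hU : ∀ x ∈ U, x.swap ∈ U) (hdiag : ∀ i, (i, i) ∈ U) (hzero : z 0 = 0)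
    (hz : z * z = 1) (hm : Even m) (htail : ∀ i, m < i → z i = oneFPF i)
    (hC : IsAvoidingChain U a b c d C) (hcd : c ≤ d) (hsq : c + b = a + d → a = c)
    (hle : a + d ≤ c + b) (hmk : m < c + b) : a + c + C.card ≤ rnk z (c + b) (a + d) := by
  rw [rnk_comm hz]
  have hcols := hC.card_le_cols
  by_cases hodd : a + d = c + b → Even (c + b)
  · have := le_rnk_of_tail hzero hz hm htail hle hmk hodd
    omega
  · push Not at hodd
    obtain ⟨heq, hodd⟩ := hodd
    obtain rfl := hsq heq.symm
    obtain rfl : d = b := by omega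
    rw [Nat.not_even_iff_odd, Nat.odd_iff] at hodd
    have hlt := hC.card_lt_of_odd hU hdiag (Nat.odd_iff.mpr (by omega))
    have hrnk := le_rnk_of_tail hzero hz hm htail (Nat.sub_le (a + d) 1) hmk (by omega)
    rw [rnk_eq_rnk_pred_add z (by omega)]
    omega

theorem IsAvoidingChain.add_card_le_rnk_of_tail {U : Set (ℕ × ℕ)} {a b c d : ℕ}
    {C : Finset (ℕ × ℕ)} (hU : ∀ x ∈ U, x.swap ∈ U) (hdiag : ∀ i, (i, i) ∈ U) (hzero : z 0 = 0)
    (hz : z * z = 1) (hm : Even m) (htail : ∀ i, m < i → z i = oneFPF i)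
    (hC : IsAvoidingChain U a b c d C) (hab : a ≤ b) (hcd : c ≤ d) (hsq : c + b = a + d → a = c)
    (hmk : m < c + b ∨ m < a + d) : a + c + C.card ≤ rnk z (c + b) (a + d) := by
  rcases le_total (a + d) (c + b) with hle | hle
  · exact hC.add_card_le_rnk_of_tail_of_le hU hdiag hzero hz hm htail hcd hsq hle (by omega)
  · have := (hC.image_swap hU).add_card_le_rnk_of_tail_of_le hU hdiag hzero hz hm htail hab
      (fun heq => (hsq heq.symm).symm) hle (by omega)
    rw [card_image_swap] at this
    rw [rnk_comm hz]
    omega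

end Tail

namespace RankBound

variable {U : Set (ℕ × ℕ)} {w z : Equiv.Perm ℕ} {k l n : ℕ}

theorem symm (hU : ∀ x ∈ U, x.swap ∈ U) (hz : z * z = 1) (h : RankBound U z k l) :
    RankBound U z l k := fun C hC => by
  rw [← card_image_swap, rnk_comm hz]
  exact h _ (hC.image_swap hU)

theorem succ_row (h : RankBound U w k l) (hpos : 1 ≤ w (k + 1)) (hle : w (k + 1) ≤ l) :
    RankBound U w (k + 1) l := by
  intro C hC
  rw [rnk_succ, if_pos ⟨hpos, hle⟩]
  have hupper := h _ (hC.of_subset (Finset.filter_subset (fun x => x.1 ≤ k) C)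
    (fun x hx => by
      rw [Finset.mem_filter] at hx
      exact ⟨(hC.row x hx.1).1, hx.2⟩)
    fun x hx => hC.col x (Finset.filter_subset _ _ hx))
  have hlast := (hC.of_subset (a' := k) (b' := k + 1) (Finset.filter_subset (¬ ·.1 ≤ k) C)
    (fun x hx => by
      rw [Finset.mem_filter] at hx
      exact ⟨not_le.mp hx.2, (hC.row x hx.1).2⟩)
    fun x hx => hC.col x (Finset.filter_subset _ _ hx)).card_le_rows
  have := Finset.card_filter_add_card_filter_not (s := C) (fun x => x.1 ≤ k)
  omega

theorem zero_right (U : Set (ℕ × ℕ)) (w : Equiv.Perm ℕ) (k : ℕ) : RankBound U w k 0 :=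
  fun _ hC => hC.card_le_cols.trans (Nat.zero_le _)

theorem self_of_lt_apply (hU : ∀ x ∈ U, x.swap ∈ U) (hdiag : ∀ i, (i, i) ∈ U) (hz : z ∈ FPFIn n)
    (hn : n < k + 1) (hk : k + 1 < z (k + 1)) : RankBound U z (k + 1) (k + 1) := by
  obtain ⟨⟨hzero, hfix, hinv, -⟩, hD⟩ := hz
  intro C hC
  have hrnk : k ≤ rnk z k (k + 1) := by
    refine le_rnk_iff.mpr fun a ha hak => ⟨one_le_apply hzero ha, ?_⟩
    by_contra! hlt
    have : (k + 1, a) ∈ Dss z := ⟨ha, by simp only; omega, by simp only; omega, hlt⟩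
    exact absurd (hD this).1.2 (not_le.mpr hn)
  have hsucc := rnk_succ z k (k + 1)
  obtain ⟨r, hr⟩ := even_rnk_self (k := k + 1) hinv fun i hi _ => hfix i hi
  rcases Nat.even_or_odd (k + 1) with ⟨t, ht⟩ | hodd
  · have := hC.card_le_cols
    omega
  · have := hC.card_lt_of_odd hU hdiag hodd
    omega

/-- Outside `[n] × [n]` there is no box of the Rothe diagram, so one of the last row and the last
column contains a nonzero entry of the permutation matrix. -/
theorem succ_succ (hU : ∀ x ∈ U, x.swap ∈ U) (hdiag : ∀ i, (i, i) ∈ U) (hz : z ∈ FPFIn n)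
    (hn : n < k + 1) (hlk : l ≤ k) (hrow : RankBound U z k (l + 1))
    (hcol : RankBound U z (k + 1) l) : RankBound U z (k + 1) (l + 1) := by
  have hzero := hz.1.1
  have hinv := hz.1.2.2.1
  by_cases hk : z (k + 1) ≤ l + 1
  · exact hrow.succ_row (one_le_apply hzero (Nat.le_add_left 1 k)) hk
  by_cases hl : z (l + 1) ≤ k + 1
  · exact ((hcol.symm hU hinv).succ_row (one_le_apply hzero (Nat.le_add_left 1 l)) hl).symm hU hinv
  rcases hlk.lt_or_eq with hlt | rfl
  · have : (k + 1, l + 1) ∈ Dss z := ⟨by omega, by simp only; omega, by simp only; omega,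
      by simp only; omega⟩
    exact absurd (hz.2 this).1.2 (not_le.mpr hn)
  · exact self_of_lt_apply hU hdiag hz hn (not_le.mp hk)

theorem of_forall_le (hU : ∀ x ∈ U, x.swap ∈ U) (hdiag : ∀ i, (i, i) ∈ U) (hz : z ∈ FPFIn n)
    (h : ∀ i j, j ≤ i → i ≤ n → RankBound U z i j) (k l : ℕ) : RankBound U z k l := by
  have hinv := hz.1.2.2.1
  suffices hmain : ∀ k l, l ≤ k → RankBound U z k l by
    rcases le_total l k with hlk | hkl
    · exact hmain k l hlk
    · exact (hmain l k hkl).symm hU hinv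
  intro k
  induction k with
  | zero => exact fun l hl => h 0 l hl (Nat.zero_le n)
  | succ k ihk =>
    intro l hl
    rcases Nat.lt_or_ge n (k + 1) with hn | hn
    swap
    · exact h (k + 1) l hl hn
    induction l with
    | zero => exact zero_right U z (k + 1)
    | succ l ihl =>
      have hcol := ihl (by omega)
      refine succ_succ hU hdiag hz hn (Nat.le_of_succ_le_succ hl) ?_ hcol
      rcases Nat.lt_or_ge l k with hlk | hkl
      · exact ihk (l + 1) hlk
      · obtain rfl : l = k := by omega
        exact hcol.symm hU hinv

end RankBound

/-! ### Pipe dreams and chains -/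

theorem IsFPFStdOf.apply_eq_oneFPF {m i : ℕ} {y z : Equiv.Perm ℕ} (h : IsFPFStdOf m y z)
    (hm : Even m) (hi : m < i) : z i = oneFPF i := by
  obtain ⟨t, rfl⟩ := hm
  obtain ⟨k, rfl | rfl⟩ : ∃ k, i = t + t + 2 * k + 1 ∨ i = t + t + 2 * k + 2 :=
    ⟨(i - (t + t + 1)) / 2, by omega⟩
  · rw [(h.2 k).1, oneFPF, if_pos (by omega)]
  · rw [(h.2 k).2, oneFPF, if_neg (by omega)]
    rfl

theorem rankBound_of_mem_FP {U : Set (ℕ × ℕ)} {z : Equiv.Perm ℕ} {E : Finset (ℕ × ℕ)}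
    (hU : ∀ x ∈ U, x.swap ∈ U) (hdiag : ∀ i, (i, i) ∈ U) (hzero : z 0 = 0) (hz : z * z = 1)
    (hE : E ∈ FP z) (hEU : ↑E ⊆ U) (i j : ℕ) : RankBound U z i j := by
  obtain ⟨m, y, D, hm, -, hstd, ⟨hpos, -, hword, -⟩, hsymm, rfl⟩ := hE
  intro C hC
  by_cases hm_lt : m < i ∨ m < j
  · have := hC.add_card_le_rnk_of_tail hU hdiag hzero hz hm (fun _ => hstd.apply_eq_oneFPF hm)
      i.zero_le j.zero_le (fun _ => rfl) (by simpa using hm_lt)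
    simpa using this
  · have hDU : ↑D ⊆ U := by
      rintro ⟨a, b⟩ hx
      rcases lt_trichotomy b a with hlt | rfl | hgt
      · exact hEU (Finset.mem_coe.mpr (Finset.mem_filter.mpr ⟨hx, hlt⟩))
      · exact hdiag b
      · refine hU (b, a) (hEU (Finset.mem_coe.mpr (Finset.mem_filter.mpr ⟨?_, hgt⟩)))
        rw [← hsymm]
        exact Finset.mem_image_of_mem Prod.swap hx
    have hle := (hC.anti hDU).card_le_rnk_wordProd hpos
    rwa [hword, ← rnk_congr j fun a _ ha => hstd.1 a (by omega)] at hle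

section TailSwap

variable {z : Equiv.Perm ℕ} {m : ℕ}

theorem mul_tailSwap_apply_of_le {i : ℕ} (hi : i ≤ m) : (z * tailSwap m) i = z i :=
  congrArg z (if_pos hi)

theorem mul_tailSwap_apply_of_lt {i : ℕ} (hm : Even m) (htail : ∀ i, m < i → z i = oneFPF i)
    (hi : m < i) : (z * tailSwap m) i = i := by
  have hswap : tailSwap m i = oneFPF i := by
    rw [Nat.even_iff] at hm
    change tailSwapFun m i = oneFPF i
    unfold tailSwapFun oneFPF
    split_ifs <;> omega
  rw [Equiv.Perm.mul_apply, hswap, htail _ (lt_oneFPF hm hi), oneFPF_oneFPF (by omega)]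

theorem mul_tailSwap_mem_IFPFm (hz : z ∈ IFPFInfty) (hm : Even m)
    (htail : ∀ i, m < i → z i = oneFPF i) : z * tailSwap m ∈ IFPFm m := by
  obtain ⟨hzero, hfix, hinv, -⟩ := hz
  refine ⟨(mul_tailSwap_apply_of_le m.zero_le).trans hzero, ?_, fun i hi him => ?_,
    fun i => mul_tailSwap_apply_of_lt hm htail⟩
  · ext i
    rw [Equiv.Perm.mul_apply, Equiv.Perm.one_apply]
    rcases le_or_gt i m with hi | hi
    · rw [mul_tailSwap_apply_of_le hi,
        mul_tailSwap_apply_of_le (apply_le_of_tail hinv hm htail hi),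
        apply_apply_of_mul_self_eq_one hinv]
    · rw [mul_tailSwap_apply_of_lt hm htail hi, mul_tailSwap_apply_of_lt hm htail hi]
  · rw [mul_tailSwap_apply_of_le him]
    exact hfix i hi

theorem isFPFStdOf_mul_tailSwap (hm : Even m) (htail : ∀ i, m < i → z i = oneFPF i) :
    IsFPFStdOf m (z * tailSwap m) z := by
  rw [Nat.even_iff] at hm
  refine ⟨fun i hi => (mul_tailSwap_apply_of_le hi).symm, fun k => ?_⟩
  rw [htail _ (by omega), htail _ (by omega)]
  constructor
  · exact if_pos (by omega)
  · exact if_neg (by omega)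

end TailSwap

theorem isBoundaryPath_min (h : ℕ) : IsBoundaryPath (2 * h) (min · h) := by
  constructor <;> intros <;> omega

theorem pathBound_min {U : Set (ℕ × ℕ)} {y z : Equiv.Perm ℕ} {h : ℕ} (hU : ∀ x ∈ U, x.swap ∈ U)
    (hdiag : ∀ i, (i, i) ∈ U) (hzero : z 0 = 0) (hz : z * z = 1) (hh : Even h)
    (htail : ∀ i, h < i → z i = oneFPF i) (hbound : ∀ k l, RankBound U z k l)
    (hy : ∀ i ≤ 2 * h, y i = z i) : PathBound (2 * h) U (min · h) (min · h) y := by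
  intro k l C hk _ hrow hcol hC
  beta_reduce at hrow hcol hC ⊢
  rw [rnk_congr (w' := z) l fun a _ ha => hy a (ha.trans hk)]
  by_cases hkl : k ≤ h ∧ l ≤ h
  · have := hbound k l C (hC.of_le (Nat.zero_le _) (min_le_left k h) (Nat.zero_le _)
      (min_le_left l h))
    omega
  · have := hC.add_card_le_rnk_of_tail hU hdiag hzero hz hh htail hrow hcol (by omega) (by omega)
    rw [Nat.sub_add_cancel (min_le_left k h), Nat.sub_add_cancel (min_le_left l h)] at this
    omega

theorem exists_mem_FP_subset {U : Set (ℕ × ℕ)} {z : Equiv.Perm ℕ} (hU : ∀ x ∈ U, x.swap ∈ U)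
    (hdiag : ∀ i, (i, i) ∈ U) (hz : z ∈ IFPFInfty) (hbound : ∀ k l, RankBound U z k l) :
    ∃ E ∈ FP z, ↑E ⊆ U := by
  obtain ⟨N, hN⟩ := hz.2.2.2
  have hm : Even (2 * (2 * N)) := even_two_mul _
  have htail : ∀ i, 2 * (2 * N) < i → z i = oneFPF i := fun i hi => hN i (by omega)
  have hy := mul_tailSwap_mem_IFPFm hz hm htail
  obtain ⟨E, hE, hword, hcard⟩ := (pathBound_min hU hdiag hz.1 hz.2.2.1 (even_two_mul N)
    (fun i hi => hN i (by omega)) hbound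
    fun i => mul_tailSwap_apply_of_le).exists_symmetrize hU hdiag (isBoundaryPath_min _) hy
  refine ⟨E, ⟨_, _, symmetrize (2 * N) E, hm, hy, isFPFStdOf_mul_tailSwap hm htail, ?_,
    image_swap_symmetrize _ E, (filter_symmetrize fun x hx => (hE hx).2.2.1).symm⟩,
    hE.trans Set.inter_subset_left⟩
  rw [← hword] at hcard ⊢
  exact mem_RP_of_card_le
    (fun _ => one_le_of_mem_symmetrize fun x hx => ⟨(hE hx).2.1, (hE hx).2.2.1⟩) hcard

theorem exists_mem_FP_subset_iff {n : ℕ} {U : Set (ℕ × ℕ)} {z : Equiv.Perm ℕ} (hz : z ∈ FPFIn n)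
    (hU : ∀ x ∈ U, x.swap ∈ U) (hdiag : ∀ i, (i, i) ∈ U) :
    (∃ E ∈ FP z, ↑E ⊆ U) ↔ ∀ i j, j ≤ i → i ≤ n → RankBound U z i j := by
  constructor
  · rintro ⟨E, hE, hEU⟩ i j - -
    exact rankBound_of_mem_FP hU hdiag hz.1.1 hz.1.2.2.1 hE hEU i j
  · exact fun h => exists_mem_FP_subset hU hdiag hz.1 (RankBound.of_forall_le hU hdiag hz h)

/-! ### The sets `A ⊙ B` -/

section PairBox

variable {n : ℕ}

/-- The `t`-th box `(a_t, b_{r-t})` of `A ⊙ B`, in the one-based coordinates of chains. -/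
def pairBox (A B : Finset (Fin n)) (h : A.card = B.card) (t : Fin A.card) : ℕ × ℕ :=
  ((A.orderEmbOfFin rfl t : ℕ) + 1, (B.orderEmbOfFin h.symm t.rev : ℕ) + 1)

theorem pairBox_antidiagonal {A B : Finset (Fin n)} (h : A.card = B.card) {s t : Fin A.card}
    (hst : s < t) : (pairBox A B h s).1 < (pairBox A B h t).1 ∧
      (pairBox A B h t).2 < (pairBox A B h s).2 :=
  ⟨Nat.succ_lt_succ ((A.orderEmbOfFin rfl).strictMono hst),
    Nat.succ_lt_succ ((B.orderEmbOfFin h.symm).strictMono (Fin.rev_lt_rev.mpr hst))⟩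

theorem pairBox_injective {A B : Finset (Fin n)} (h : A.card = B.card) :
    Function.Injective (pairBox A B h) := fun _ _ hst =>
  (A.orderEmbOfFin rfl).injective (Fin.ext (Nat.succ_injective (congrArg Prod.fst hst)))

theorem isAvoidingChain_image_pairBox {U : Set (ℕ × ℕ)} {i j : ℕ} {A B : Finset (Fin n)}
    (h : A.card = B.card) (hA : ∀ a ∈ A, (a : ℕ) + 1 ≤ i) (hB : ∀ b ∈ B, (b : ℕ) + 1 ≤ j)
    (hU : ∀ t, pairBox A B h t ∉ U) :
    IsAvoidingChain U 0 i 0 j (Finset.univ.image (pairBox A B h)) := by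
  constructor <;> simp only [Finset.mem_image, Finset.mem_univ, true_and, forall_exists_index,
    forall_apply_eq_imp_iff]
  · intro s t
    rcases lt_trichotomy s t with hst | rfl | hts
    · exact .inr (.inl (pairBox_antidiagonal h hst))
    · exact .inl rfl
    · exact .inr (.inr (pairBox_antidiagonal h hts))
  · exact hU
  · exact fun t => ⟨Nat.succ_pos _, hA _ (Finset.orderEmbOfFin_mem A rfl t)⟩
  · exact fun t => ⟨Nat.succ_pos _, hB _ (Finset.orderEmbOfFin_mem B h.symm t.rev)⟩

theorem IsAvoidingChain.exists_enumeration {U : Set (ℕ × ℕ)} {a b c d k : ℕ}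
    {C : Finset (ℕ × ℕ)} (hC : IsAvoidingChain U a b c d C) (hk : C.card = k) :
    ∃ f : Fin k → ℕ × ℕ, (∀ t, f t ∈ C) ∧ ∀ s t, s < t → (f s).1 < (f t).1 ∧ (f t).2 < (f s).2 := by
  have hinj : Set.InjOn Prod.fst (C : Set (ℕ × ℕ)) := fun x hx y hy hxy => by
    rcases hC.antidiagonal x hx y hy with h | h | h
    · exact h
    · exact absurd hxy h.1.ne
    · exact absurd hxy h.1.ne'
  have hcard := (Finset.card_image_of_injOn hinj).trans hk
  have hex (t) : ∃ x ∈ C, x.1 = (C.image Prod.fst).orderEmbOfFin hcard t :=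
    Finset.mem_image.mp (Finset.orderEmbOfFin_mem _ hcard t)
  choose f hf hfst using hex
  refine ⟨f, hf, fun s t hst => ?_⟩
  have hlt : (f s).1 < (f t).1 := by
    rw [hfst, hfst]
    exact (Finset.orderEmbOfFin _ hcard).strictMono hst
  rcases hC.antidiagonal _ (hf s) _ (hf t) with heq | h | h
  · exact absurd (congrArg Prod.fst heq) hlt.ne
  · exact h
  · exact absurd h.1 hlt.not_gt

theorem exists_orderEmbOfFin_eq {k : ℕ} {f : Fin k → Fin n} (hf : StrictMono f) :
    ∃ (A : Finset (Fin n)) (h : A.card = k), ⇑(A.orderEmbOfFin h) = f := by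
  have h : (Finset.univ.image f).card = k := by
    rw [Finset.card_image_of_injective _ hf.injective, Finset.card_fin]
  exact ⟨_, h, (Finset.orderEmbOfFin_unique h
    (fun t => Finset.mem_image_of_mem f (Finset.mem_univ t)) hf).symm⟩

theorem IsAvoidingChain.exists_pairBox_mem {U : Set (ℕ × ℕ)} {i j : ℕ} {C : Finset (ℕ × ℕ)}
    (hC : IsAvoidingChain U 0 i 0 j C) (hi : i ≤ n) (hj : j ≤ n) :
    ∃ (A B : Finset (Fin n)) (h : A.card = B.card), A.card = C.card ∧
      ∀ t, pairBox A B h t ∈ C := by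
  obtain ⟨k, hk⟩ : ∃ k, C.card = k := ⟨_, rfl⟩
  obtain ⟨f, hf, hlt⟩ := hC.exists_enumeration hk
  have hrow t := hC.row _ (hf t)
  have hcol t := hC.col _ (hf t)
  obtain ⟨A, hA, hAf⟩ := exists_orderEmbOfFin_eq (n := n)
    (f := fun t => ⟨(f t).1 - 1, by have := hrow t; omega⟩) fun s t hst => by
      have := hlt s t hst
      have := hrow s
      exact Fin.mk_lt_mk.mpr (by omega)
  obtain ⟨B, hB, hBf⟩ := exists_orderEmbOfFin_eq (n := n)
    (f := fun t => ⟨(f t.rev).2 - 1, by have := hcol t.rev; omega⟩) fun s t hst => by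
      have := hlt t.rev s.rev (Fin.rev_lt_rev.mpr hst)
      have := hcol s.rev
      exact Fin.mk_lt_mk.mpr (by omega)
  subst hA
  refine ⟨A, B, hB.symm, hk.symm, fun t => ?_⟩
  have hbox : pairBox A B hB.symm t = f t := by
    simp only [pairBox, hAf, hBf, Fin.rev_rev]
    exact Prod.ext (Nat.sub_add_cancel (hrow t).1) (Nat.sub_add_cancel (hcol t).1)
  exact hbox ▸ hf t

theorem exists_pairBox_notMem_iff {U : Set (ℕ × ℕ)} {i j k : ℕ} (hi : i ≤ n) (hj : j ≤ n) :
    (∃ (A B : Finset (Fin n)) (h : A.card = B.card), (∀ a ∈ A, (a : ℕ) + 1 ≤ i) ∧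
      (∀ b ∈ B, (b : ℕ) + 1 ≤ j) ∧ A.card = k ∧ ∀ t, pairBox A B h t ∉ U) ↔
    ∃ C, IsAvoidingChain U 0 i 0 j C ∧ C.card = k := by
  constructor
  · rintro ⟨A, B, h, hA, hB, rfl, hU⟩
    refine ⟨_, isAvoidingChain_image_pairBox h hA hB hU, ?_⟩
    rw [Finset.card_image_of_injective _ (pairBox_injective h), Finset.card_fin]
  · rintro ⟨C, hC, rfl⟩
    obtain ⟨A, B, h, hcard, hmem⟩ := hC.exists_pairBox_mem hi hj
    refine ⟨A, B, h, fun a ha => ?_, fun b hb => ?_, hcard, fun t => hC.notMem _ (hmem t)⟩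
    · obtain ⟨t, rfl⟩ := (A.range_orderEmbOfFin rfl).symm ▸ Finset.mem_coe.mpr ha
      exact (hC.row _ (hmem t)).2
    · obtain ⟨t, rfl⟩ := (B.range_orderEmbOfFin h.symm).symm ▸ Finset.mem_coe.mpr hb
      have := (hC.col _ (hmem t.rev)).2
      rwa [pairBox, Fin.rev_rev] at this

end PairBox

theorem not_rankBound_iff {U : Set (ℕ × ℕ)} {w : Equiv.Perm ℕ} {i j : ℕ} :
    ¬ RankBound U w i j ↔ ∃ C, IsAvoidingChain U 0 i 0 j C ∧ C.card = rnk w i j + 1 := by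
  constructor
  · intro h
    simp only [RankBound, not_forall, not_le] at h
    obtain ⟨C, hC, hcard⟩ := h
    obtain ⟨C', hsub, hcard'⟩ := Finset.exists_subset_card_eq (Nat.succ_le_of_lt hcard)
    exact ⟨C', hC.subset hsub, hcard'⟩
  · rintro ⟨C, hC, hcard⟩ h
    have := h C hC
    omega

/-! ### Membership in the monomial ideals -/

section Variables

variable {n : ℕ}

/-- The box of the variable `u_{ij}`, in one-based coordinates. -/
def ssBox (v : SSVar n) : ℕ × ℕ := ((v.1.1 : ℕ) + 1, (v.1.2 : ℕ) + 1)

/-- The boxes `(i, j)` such that neither `u_{ij}` nor `u_{ji}` is a variable in `S`. All boxes of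
the diagonal and all boxes outside `[n] × [n]` belong to it. -/
def boxesOff (S : Set (SSVar n)) : Set (ℕ × ℕ) :=
  {b | ∀ v ∈ S, ¬(ssBox v = b ∨ ssBox v = b.swap)}

theorem ssBox_lt (v : SSVar n) : (ssBox v).2 < (ssBox v).1 := Nat.succ_lt_succ v.2

theorem ssBox_injective : Function.Injective (ssBox (n := n)) := fun v w h => by
  simp only [ssBox, Prod.mk.injEq, add_left_inj, Fin.val_inj] at h
  exact Subtype.ext (Prod.ext h.1 h.2)

theorem ssBox_ne_swap (v w : SSVar n) : ssBox v ≠ (ssBox w).swap := fun h => by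
  have := ssBox_lt v
  rw [h] at this
  exact this.not_gt (ssBox_lt w)

theorem eq_of_ssBox_eq_or_swap {v w : SSVar n} {b : ℕ × ℕ} (hv : ssBox v = b ∨ ssBox v = b.swap)
    (hw : ssBox w = b ∨ ssBox w = b.swap) : v = w := by
  rcases hv with rfl | hv <;> rcases hw with hw | hw
  · exact ssBox_injective hw.symm
  · exact absurd hw (ssBox_ne_swap w v)
  · exact absurd (hw ▸ hv) (ssBox_ne_swap v w)
  · exact ssBox_injective (hv.trans hw.symm)

theorem exists_ssBox_eq {a b : Fin n} (hab : a ≠ b) : ∃ v : SSVar n,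
    ssBox v = ((a : ℕ) + 1, (b : ℕ) + 1) ∨ ssBox v = ((b : ℕ) + 1, (a : ℕ) + 1) := by
  rcases lt_or_gt_of_ne hab with hlt | hgt
  · exact ⟨⟨(b, a), hlt⟩, .inr rfl⟩
  · exact ⟨⟨(a, b), hgt⟩, .inl rfl⟩

theorem swap_mem_boxesOff (S : Set (SSVar n)) : ∀ b ∈ boxesOff S, b.swap ∈ boxesOff S :=
  fun b hb v hv h => hb v hv (h.symm.imp_left fun h => h.trans b.swap_swap)

theorem diag_mem_boxesOff (S : Set (SSVar n)) (i : ℕ) : (i, i) ∈ boxesOff S := fun v _ h => by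
  have := ssBox_lt v
  rw [or_self_iff.mp h] at this
  exact this.false

theorem notMem_boxesOff {S : Set (SSVar n)} {b : ℕ × ℕ} :
    b ∉ boxesOff S ↔ ∃ v ∈ S, ssBox v = b ∨ ssBox v = b.swap := by
  simp only [boxesOff, Set.mem_ofPred_eq, not_forall, not_not, exists_prop]

theorem not_subset_boxesOff_iff {S : Set (SSVar n)} {D : Finset (ℕ × ℕ)}
    (hD : ∀ b ∈ D, b.2 < b.1) : ¬ ↑D ⊆ boxesOff S ↔ ∃ v, ssBox v ∈ D ∧ v ∈ S := by
  simp only [Set.not_subset, notMem_boxesOff, Finset.mem_coe]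
  constructor
  · rintro ⟨b, hbD, v, hv, rfl | hswap⟩
    · exact ⟨v, hbD, hv⟩
    · have := ssBox_lt v
      rw [hswap] at this
      exact absurd this (hD b hbD).not_gt
  · rintro ⟨v, hvD, hv⟩
    exact ⟨ssBox v, hvD, v, hv, .inl rfl⟩

/-- The variables whose product is `u^ss_{AB}` when `A ⊙ B` avoids the diagonal. -/
def pairVars (A B : Finset (Fin n)) (h : A.card = B.card) : Finset (SSVar n) :=
  Finset.univ.filter fun v : SSVar n => ∃ t : Fin A.card,
    (A.orderEmbOfFin rfl t = v.1.1 ∧ B.orderEmbOfFin h.symm t.rev = v.1.2) ∨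
    (A.orderEmbOfFin rfl t = v.1.2 ∧ B.orderEmbOfFin h.symm t.rev = v.1.1)

theorem mem_pairVars {A B : Finset (Fin n)} {h : A.card = B.card} {v : SSVar n} :
    v ∈ pairVars A B h ↔
      ∃ t, ssBox v = pairBox A B h t ∨ ssBox v = (pairBox A B h t).swap := by
  simp only [pairVars, Finset.mem_filter, Finset.mem_univ, true_and, ssBox, pairBox,
    Prod.swap_prod_mk, Prod.mk.injEq, add_left_inj, Fin.val_inj, eq_comm, and_comm]

theorem forall_pairBox_notMem_boxesOff_iff {A B : Finset (Fin n)} {h : A.card = B.card}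
    {S : Set (SSVar n)} : (∀ t, pairBox A B h t ∉ boxesOff S) ↔
      (∀ t, A.orderEmbOfFin rfl t ≠ B.orderEmbOfFin h.symm t.rev) ∧ ↑(pairVars A B h) ⊆ S := by
  constructor
  · refine fun hbox => ⟨fun t ht => hbox t ?_, fun v hv => ?_⟩
    · rw [pairBox, ht]
      exact diag_mem_boxesOff S _
    · obtain ⟨t, ht⟩ := mem_pairVars.mp (Finset.mem_coe.mp hv)
      obtain ⟨w, hw, hwt⟩ := notMem_boxesOff.mp (hbox t)
      exact eq_of_ssBox_eq_or_swap hwt ht ▸ hw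
  · rintro ⟨hne, hsub⟩ t ht
    obtain ⟨v, hv⟩ := exists_ssBox_eq (hne t)
    exact ht v (hsub (Finset.mem_coe.mpr (mem_pairVars.mpr ⟨t, hv⟩))) hv

end Variables

section Ideals

variable {K : Type*} [CommRing K] {n : ℕ} {z : Equiv.Perm ℕ}

theorem prod_X_eq_monomial {σ : Type*} (S : Finset σ) :
    ∏ v ∈ S, (MvPolynomial.X v : MvPolynomial σ K) =
      MvPolynomial.monomial (∑ v ∈ S, Finsupp.single v 1) 1 :=
  (MvPolynomial.monomial_sum_one S _).symm

theorem sum_single_one_le_iff {σ : Type*} {S : Finset σ} {x : σ →₀ ℕ} :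
    ∑ v ∈ S, Finsupp.single v 1 ≤ x ↔ S ⊆ x.support := by
  classical
  have happly (w : σ) : (∑ v ∈ S, Finsupp.single v 1 : σ →₀ ℕ) w = if w ∈ S then 1 else 0 := by
    simp [Finsupp.finsetSum_apply, Finsupp.single_apply]
  refine Finsupp.le_def.trans (forall_congr' fun w => ?_)
  rw [happly, Finsupp.mem_support_iff]
  split_ifs with hw
  · simp [hw, Nat.one_le_iff_ne_zero]
  · simp [hw]

theorem ussMon_eq_zero {A B : Finset (Fin n)} (h : A.card = B.card)
    (hdiag : ∃ t, A.orderEmbOfFin rfl t = B.orderEmbOfFin h.symm t.rev) : ussMon K A B = 0 := by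
  rw [ussMon, dif_pos h, if_pos hdiag]

theorem ussMon_eq_monomial {A B : Finset (Fin n)} (h : A.card = B.card)
    (hdiag : ∀ t, A.orderEmbOfFin rfl t ≠ B.orderEmbOfFin h.symm t.rev) :
    ussMon K A B = MvPolynomial.monomial (∑ v ∈ pairVars A B h, Finsupp.single v 1) 1 := by
  rw [ussMon, dif_pos h, if_neg (not_exists.mpr hdiag), ← prod_X_eq_monomial]
  rfl

theorem JssIdeal_eq_span_monomial (K : Type*) [CommRing K] (n : ℕ) (z : Equiv.Perm ℕ) :
    JssIdeal K n z = Ideal.span ((fun s => MvPolynomial.monomial s (1 : K)) ''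
      {s | ∃ (i j : ℕ) (A B : Finset (Fin n)) (h : A.card = B.card), 1 ≤ j ∧ j ≤ i ∧ i ≤ n ∧
        (∀ a ∈ A, (a : ℕ) + 1 ≤ i) ∧ (∀ b ∈ B, (b : ℕ) + 1 ≤ j) ∧ A.card = rnk z i j + 1 ∧
        (∀ t, A.orderEmbOfFin rfl t ≠ B.orderEmbOfFin h.symm t.rev) ∧
        s = ∑ v ∈ pairVars A B h, Finsupp.single v 1}) := by
  apply le_antisymm
  · rw [JssIdeal, JssIdealOfTable, Ideal.span_le]
    rintro _ ⟨i, j, A, B, hj, hji, hi, hA, hB, hcardA, hcardB, rfl⟩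
    have h := hcardA.trans hcardB.symm
    by_cases hdiag : ∃ t, A.orderEmbOfFin rfl t = B.orderEmbOfFin h.symm t.rev
    · rw [ussMon_eq_zero h hdiag]
      exact Ideal.zero_mem _
    · have hdiag := not_exists.mp hdiag
      rw [ussMon_eq_monomial h hdiag]
      exact Ideal.subset_span ⟨_, ⟨i, j, A, B, h, hj, hji, hi, hA, hB, hcardA, hdiag, rfl⟩, rfl⟩
  · refine Ideal.span_mono ?_
    rintro _ ⟨_, ⟨i, j, A, B, h, hj, hji, hi, hA, hB, hcard, hdiag, rfl⟩, rfl⟩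
    exact ⟨i, j, A, B, hj, hji, hi, hA, hB, hcard, h ▸ hcard, (ussMon_eq_monomial h hdiag).symm⟩

theorem mem_JssIdeal_iff {f : MvPolynomial (SSVar n) K} :
    f ∈ JssIdeal K n z ↔ ∀ x ∈ f.support,
      ∃ i j, j ≤ i ∧ i ≤ n ∧ ¬ RankBound (boxesOff (x.support : Set (SSVar n))) z i j := by
  rw [JssIdeal_eq_span_monomial, MvPolynomial.mem_ideal_span_monomial_image]
  refine forall₂_congr fun x _ => ⟨?_, ?_⟩
  · rintro ⟨_, ⟨i, j, A, B, h, -, hji, hi, hA, hB, hcard, hdiag, rfl⟩, hle⟩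
    refine ⟨i, j, hji, hi, not_rankBound_iff.mpr
      ((exists_pairBox_notMem_iff hi (hji.trans hi)).mp ⟨A, B, h, hA, hB, hcard, ?_⟩)⟩
    exact forall_pairBox_notMem_boxesOff_iff.mpr
      ⟨hdiag, Finset.coe_subset.mpr (sum_single_one_le_iff.mp hle)⟩
  · rintro ⟨i, j, hji, hi, hrank⟩
    have hj : 1 ≤ j := Nat.one_le_iff_ne_zero.mpr fun hj =>
      hrank (hj ▸ RankBound.zero_right _ z i)
    obtain ⟨A, B, h, hA, hB, hcard, hbox⟩ :=
      (exists_pairBox_notMem_iff hi (hji.trans hi)).mpr (not_rankBound_iff.mp hrank)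
    obtain ⟨hdiag, hsub⟩ := forall_pairBox_notMem_boxesOff_iff.mp hbox
    exact ⟨_, ⟨i, j, A, B, h, hj, hji, hi, hA, hB, hcard, hdiag, rfl⟩,
      sum_single_one_le_iff.mpr (Finset.coe_subset.mp hsub)⟩

theorem lt_of_mem_FP {D : Finset (ℕ × ℕ)} (hD : D ∈ FP z) : ∀ b ∈ D, b.2 < b.1 := by
  obtain ⟨m, y, D', -, -, -, -, -, rfl⟩ := hD
  exact fun b hb => (Finset.mem_filter.mp hb).2

theorem mem_span_X_iff_of_mem_FP {D : Finset (ℕ × ℕ)} (hD : D ∈ FP z)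
    {f : MvPolynomial (SSVar n) K} :
    f ∈ Ideal.span {g | ∃ v : SSVar n, ssBox v ∈ D ∧ g = MvPolynomial.X v} ↔
      ∀ x ∈ f.support, ¬ ↑D ⊆ boxesOff (x.support : Set (SSVar n)) := by
  have himage : {g : MvPolynomial (SSVar n) K | ∃ v : SSVar n, ssBox v ∈ D ∧ g = MvPolynomial.X v} =
      MvPolynomial.X '' {v | ssBox v ∈ D} := by
    ext g
    exact exists_congr fun v => and_congr_right fun _ => eq_comm
  rw [himage, MvPolynomial.mem_ideal_span_X_image]
  refine forall₂_congr fun x _ => ?_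
  rw [not_subset_boxesOff_iff (lt_of_mem_FP hD)]
  simp only [Set.mem_ofPred_eq, Finset.mem_coe, Finsupp.mem_support_iff]

end Ideals

theorem statement7_general (K : Type*) [CommRing K] (n : ℕ) (z : Equiv.Perm ℕ)
    (hz : z ∈ FPFIn n) :
    JssIdeal K n z = ⨅ D ∈ FP z,
      Ideal.span {g : MvPolynomial (SSVar n) K |
        ∃ v : SSVar n, ((v.1.1 : ℕ) + 1, (v.1.2 : ℕ) + 1) ∈ D ∧ g = MvPolynomial.X v} := by
  ext f
  simp only [Ideal.mem_iInf]
  calc f ∈ JssIdeal K n z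
    _ ↔ ∀ x ∈ f.support,
          ¬ ∀ i j, j ≤ i → i ≤ n → RankBound (boxesOff (x.support : Set (SSVar n))) z i j := by
        simp only [mem_JssIdeal_iff, not_forall, exists_prop]
    _ ↔ ∀ x ∈ f.support, ¬ ∃ D ∈ FP z, ↑D ⊆ boxesOff (x.support : Set (SSVar n)) :=
        forall₂_congr fun x _ => not_congr (exists_mem_FP_subset_iff hz
          (swap_mem_boxesOff _) (diag_mem_boxesOff _)).symm
    _ ↔ ∀ D ∈ FP z, ∀ x ∈ f.support, ¬ ↑D ⊆ boxesOff (x.support : Set (SSVar n)) := by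
        simp only [not_exists, not_and]
        exact ⟨fun h D hD x hx => h x hx D hD, fun h x hx D hD => h D hD x hx⟩
    _ ↔ _ := forall₂_congr fun D hD => (mem_span_X_iff_of_mem_FP hD).symm

/-- For `z ∈ FPF_n(I_n)`, the ideal `J^ss_z` equals the intersection,
over all fpf-involution pipe dreams `D ∈ FP(z)`, of the ideals `(u_{ij} : (i,j) ∈ D)`. -/
theorem statement7 (K : Type*) [Field K] [IsAlgClosed K] (n : ℕ) (hn : 1 ≤ n)
    (z : Equiv.Perm ℕ) (hz : z ∈ FPFIn n) :
    JssIdeal K n z = ⨅ D ∈ FP z,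
      Ideal.span {g : MvPolynomial (SSVar n) K |
        ∃ v : SSVar n, ((v.1.1 : ℕ) + 1, (v.1.2 : ℕ) + 1) ∈ D ∧ g = MvPolynomial.X v} :=
  statement7_general K n z hz

end Paper
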